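/- arXiv:1503.09143 — 2 statements merged into one kernel-verified Lean document; each statement's English description precedes it below -/
import Mathlib

section
/- (Lemma 2.1, pointwise dispersive estimates for the Airy evolution.) There is an absolute constant C such that for every t ≥ 1 and every Schwartz function f with ‖f̂‖_{L^∞} + t^{-1/6}‖x f‖_{L²} ≤ 1, the function u(t,x) = (2π)^{-1/2}∫_ℝ e^{i(xξ+tξ³)} f̂(ξ) dξ satisfies, for every x ∈ ℝ: (i) for all β ∈ [0,1], |(|∂_x|^β u)(t,x)| ≤ C t^{-1/3-β/3} (1 + |x|/t^{1/3})^{-1/4+β/2}; and (ii) |∂_x u(t,x)| ≤ C t^{-2/3} (1 + |x|/t^{1/3})^{1/4}. -/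
/-!
Rescaling frequency by `ξ = t^(-1/3) η` reduces the claim to `t = 1`: with `y = x / t^(1/3)` and
`H(η) = f̂(t^(-1/3) η)`, Plancherel turns the hypothesis into `|H| ≤ 1` and `‖H'‖_{L²} ≤ 1`
(`FT_schwartz`, `airy_bound`), and `|∫ e^{i(yη + η³)} |η|^β H(η) dη| ≲ (1 + |y|)^(-1/4 + β/2)` has
to be shown. The two half-lines are treated separately (`line_bound`), so that the weights `|η|^β`
and `iη` are covered together.

On `(0, ∞)` (`half_line_bound`) put `s = (1 + |y|)^(1/4)`, so that the target is `s^(2β - 1)`, and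
let `ψ = 3η² + y` be the derivative of the phase `φ`. Instead of cutting out a neighbourhood of the
stationary point `a = √(|y|/3)`, one integrates by parts with the regularized multiplier
`ψ K`, `K = 1 / (s² + ψ²)`, in place of `1 / ψ`: differentiating `F = ψ K e^{iφ} η^β H` produces
`i (1 - s² K) e^{iφ} η^β H` plus terms in which the derivative falls on `ψ K`, `η^β` or `H`.
Hence the integrand is `-i F'` plus a remainder, which is bounded pointwise in `remainder_bound`:
the inequality `(s² + η)² K ≲ s² / (1 + s² (η - a)²)` of `kernel_bound` controls everything by a
Lorentzian of mass `π`, by `β η^(β - 1)` on `(0, 1]`, by `1 / (1 + η²)` and by `|H'|²`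
(Cauchy–Schwarz is used in its pointwise AM-GM form). The boundary term `F(0)` is at most
`1 / s ≤ s^(2β - 1)`.
-/

noncomputable section

open MeasureTheory Real Complex

/-- Fourier transform: ĝ(ξ) = (2π)^{-1/2} ∫ e^{-ixξ} g(x) dx. -/
def FT (g : ℝ → ℂ) (ξ : ℝ) : ℂ :=
  (Real.sqrt (2 * Real.pi) : ℂ)⁻¹ * ∫ x : ℝ, Complex.exp (-(Complex.I * x * ξ)) * g x

/-- L² norm. -/
def L2norm (g : ℝ → ℂ) : ℝ := Real.sqrt (∫ x : ℝ, ‖g x‖ ^ 2)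

/-- L^∞ norm (as a pointwise supremum). -/
def LinfNorm (g : ℝ → ℂ) : ℝ := ⨆ x : ℝ, ‖g x‖

/-- The free Airy evolution with a fractional derivative:
`(|∂ₓ|^β e^{-t∂ₓ³} f)(x) = (2π)^{-1/2} ∫ e^{i(xξ+tξ³)} |ξ|^β f̂(ξ) dξ`. -/
def fracAiry (g : ℝ → ℂ) (t β x : ℝ) : ℂ :=
  (Real.sqrt (2 * Real.pi) : ℂ)⁻¹ *
    ∫ ξ : ℝ, Complex.exp (Complex.I * (x * ξ + t * ξ ^ 3)) * ((|ξ| ^ β : ℝ) : ℂ) * FT g ξ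

/-- `(∂ₓ e^{-t∂ₓ³} f)(x) = (2π)^{-1/2} ∫ e^{i(xξ+tξ³)} (iξ) f̂(ξ) dξ`. -/
def derivAiry (g : ℝ → ℂ) (t x : ℝ) : ℂ :=
  (Real.sqrt (2 * Real.pi) : ℂ)⁻¹ *
    ∫ ξ : ℝ, Complex.exp (Complex.I * (x * ξ + t * ξ ^ 3)) * (Complex.I * ξ) * FT g ξ

/-! ### Pointwise bounds and the dominating integrals -/

/-- Lower bound for `s² + ψ²`: since `|ψ| ≥ 3 |η - a| (η + a)` and `η + a` is comparable to
`s² + η` unless `s` is close to `1`, the kernel `1 / (s² + ψ²)` is dominated by a Lorentzian of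
width `1 / s` centred at `a`. -/
lemma kernel_bound {s a η : ℝ} (hs : 1 ≤ s) (ha : 0 ≤ a) (hsa : s ^ 4 = 1 + 3 * a ^ 2)
    (hη : 0 ≤ η) :
    (s ^ 2 + η) ^ 2 * (1 + s ^ 2 * (η - a) ^ 2) ≤
      100 * s ^ 2 * (s ^ 2 + 9 * (η ^ 2 - a ^ 2) ^ 2) := by
  have hs2 : 1 ≤ s ^ 2 := one_le_pow₀ hs
  obtain ⟨m, hm⟩ : ∃ m, m = s ^ 2 := ⟨_, rfl⟩
  have hsa' : m ^ 2 = 1 + 3 * a ^ 2 := by rw [hm]; linarith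
  rw [← hm] at hs2 ⊢
  have ham : a ≤ m := by nlinarith
  have hfac : (η ^ 2 - a ^ 2) ^ 2 = (η - a) ^ 2 * (η + a) ^ 2 := by ring
  rw [hfac]
  set d := (η - a) ^ 2 with hd
  have hd0 : 0 ≤ d := sq_nonneg _
  rcases le_total (m / 4) (η + a) with h | h
  · have h1 : (m + η) ^ 2 ≤ 25 * (η + a) ^ 2 := by nlinarith
    have h2 : m ^ 2 ≤ 16 * (η + a) ^ 2 := by nlinarith
    have h3 : (m + η) ^ 2 ≤ 8 * m ^ 2 + 2 * d := by
      have : (m + η) ^ 2 ≤ (2 * m + |η - a|) ^ 2 := by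
        have := le_abs_self (η - a)
        exact pow_le_pow_left₀ (by positivity) (by linarith) 2
      have h4 : |η - a| ^ 2 = d := sq_abs _
      nlinarith [sq_nonneg (2 * m - |η - a|)]
    have h5 : (m + η) ^ 2 * (m * d) ≤ 25 * (η + a) ^ 2 * (m * d) := by gcongr
    have h6 : d ≤ 16 * (η + a) ^ 2 * d * m := by
      have : 1 ≤ 16 * (η + a) ^ 2 * m := by nlinarith
      nlinarith
    nlinarith [mul_nonneg hd0 (sq_nonneg (η + a))]
  · have h1 : (m + η) ^ 2 ≤ (5 / 4 * m) ^ 2 := by gcongr; linarith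
    have h2 : d ≤ m ^ 2 / 16 := by nlinarith
    have h3 : a ^ 2 ≤ m ^ 2 / 16 := by nlinarith
    have h4 : m ^ 2 ≤ 2 := by nlinarith
    have h4' : m ≤ 2 := by nlinarith
    have h5 : m * d ≤ 1 := by nlinarith
    have h6 : (m + η) ^ 2 * (1 + m * d) ≤ (5 / 4 * m) ^ 2 * (1 + 1) := by gcongr
    have : 0 ≤ m * (d * (η + a) ^ 2) := by positivity
    linarith [sq_nonneg m]

lemma rpow_weight_bound {s β η : ℝ} (hs : 1 ≤ s) (hβ0 : 0 ≤ β) (hβ1 : β ≤ 1) (hη : 0 ≤ η) :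
    η ^ β * s ≤ s ^ (2 * β - 1) * (s ^ 2 + η) := by
  have hs0 : 0 < s := by linarith
  have hW : 0 < s ^ 2 + η := by positivity
  have h1 : η ^ β ≤ (s ^ 2 + η) ^ β := by
    apply Real.rpow_le_rpow hη _ hβ0; nlinarith
  have h2 : (s ^ 2 + η) ^ (β - 1) ≤ (s ^ 2) ^ (β - 1) :=
    Real.rpow_le_rpow_of_nonpos (by positivity) (by linarith) (by linarith)
  have h3 : (s ^ 2 + η) ^ β = (s ^ 2 + η) ^ (β - 1) * (s ^ 2 + η) := by
    rw [Real.rpow_sub_one hW.ne']; field_simp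
  have h4 : (s ^ 2) ^ (β - 1) * s = s ^ (2 * β - 1) := by
    rw [← Real.rpow_natCast s 2, ← Real.rpow_mul hs0.le]
    nth_rw 2 [← Real.rpow_one s]
    rw [← Real.rpow_add hs0]; congr 1; push_cast; ring
  calc η ^ β * s ≤ (s ^ 2) ^ (β - 1) * (s ^ 2 + η) * s := by
        gcongr; rw [h3] at h1; exact h1.trans (by gcongr)
    _ = _ := by rw [← h4]; ring

/-- Weighted AM-GM, the pointwise substitute for Cauchy–Schwarz. -/
lemma amgm_weight {P z Aq g : ℝ} (hP : 0 < P) (h : Aq ^ 2 ≤ 100 * P ^ 2 * g) :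
    Aq * z ≤ P * (z ^ 2 / 2 + 50 * g) := by
  have h1 : Aq ^ 2 / P ≤ 100 * P * g := by
    rw [div_le_iff₀ hP]; linarith
  have h2 : 0 ≤ (P * z - Aq) ^ 2 / P := by positivity
  have h3 : (P * z - Aq) ^ 2 / P = P * z ^ 2 - 2 * (Aq * z) + Aq ^ 2 / P := by
    field_simp; ring
  linarith

lemma half_inv_sq_le {η : ℝ} (h : 1 ≤ η) : (η⁻¹) ^ 2 / 2 ≤ (1 + η ^ 2)⁻¹ := by
  have h0 : 0 < η := by linarith
  have : (η⁻¹) ^ 2 / 2 = (2 * η ^ 2)⁻¹ := by field_simp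
  rw [this]
  exact inv_anti₀ (by positivity) (by nlinarith)

/-- Pointwise bound for the remainder of the integration by parts. The four terms on the left come
from the regularization and from the derivative falling on `ψ K`, on `η ^ β` and on `H`
respectively; `z` stands for `‖H' η‖`. -/
lemma remainder_bound {s a y β η z : ℝ} (hs : 1 ≤ s) (ha : 0 ≤ a) (hsa : s ^ 4 = 1 + 3 * a ^ 2)
    (hy : |y| = 3 * a ^ 2) (hβ0 : 0 ≤ β) (hβ1 : β ≤ 1) (hη : 0 < η) :
    s ^ 2 * (s ^ 2 + (3 * η ^ 2 + y) ^ 2)⁻¹ * η ^ β +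
      |6 * η * (s ^ 2 - (3 * η ^ 2 + y) ^ 2) * ((s ^ 2 + (3 * η ^ 2 + y) ^ 2)⁻¹) ^ 2| * η ^ β +
      |(3 * η ^ 2 + y) * (s ^ 2 + (3 * η ^ 2 + y) ^ 2)⁻¹| * (β * η ^ (β - 1)) +
      |(3 * η ^ 2 + y) * (s ^ 2 + (3 * η ^ 2 + y) ^ 2)⁻¹| * η ^ β * z ≤
    s ^ (2 * β - 1) * (800 * (s * (1 + (s * (η - a)) ^ 2)⁻¹) +
      (Set.Ioc (0:ℝ) 1).indicator (fun v => β * v ^ (β - 1)) η + (1 + η ^ 2)⁻¹ + z ^ 2) := by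
  have hs0 : 0 < s := by linarith
  have hq := rpow_weight_bound hs hβ0 hβ1 hη.le
  have hker := kernel_bound hs ha hsa hη.le
  set P := s ^ (2 * β - 1) with hPdef
  have hP : 0 < P := by positivity
  have hPs : s⁻¹ ≤ P := by
    rw [hPdef, ← Real.rpow_neg_one]
    exact Real.rpow_le_rpow_of_exponent_le hs (by linarith)
  have hq0 : 0 < η ^ β := by positivity
  have hqd : η ^ (β - 1) = η ^ β * η⁻¹ := by rw [Real.rpow_sub_one hη.ne']; rfl
  set q := η ^ β with hqdef
  have hψ : 9 * (η ^ 2 - a ^ 2) ^ 2 ≤ (3 * η ^ 2 + y) ^ 2 := by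
    rcases abs_cases y with ⟨h, h'⟩ | ⟨h, h'⟩
    · have : y = 3 * a ^ 2 := by linarith
      rw [this]; nlinarith [mul_nonneg (sq_nonneg η) (sq_nonneg a)]
    · have : y = - (3 * a ^ 2) := by linarith
      rw [this]; nlinarith
  set ψ := 3 * η ^ 2 + y with hψdef
  have hD : 0 < s ^ 2 + ψ ^ 2 := by positivity
  set K := (s ^ 2 + ψ ^ 2)⁻¹ with hK
  have hK0 : 0 < K := by positivity
  have hKD : K * (s ^ 2 + ψ ^ 2) = 1 := inv_mul_cancel₀ hD.ne'
  set W := s ^ 2 + η with hW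
  have hW0 : 0 < W := by positivity
  set g := s * (1 + (s * (η - a)) ^ 2)⁻¹ with hg
  have hg0 : 0 < g := by positivity
  -- the kernel bound in the form W²K ≤ 100 s g
  have hWK : W ^ 2 * K ≤ 100 * s * g := by
    rw [hK, hg, ← div_eq_mul_inv, div_le_iff₀ hD]
    have e : 0 < 1 + (s * (η - a)) ^ 2 := by positivity
    have : 100 * s * (s * (1 + (s * (η - a)) ^ 2)⁻¹) * (s ^ 2 + ψ ^ 2)
      = (100 * s ^ 2 * (s ^ 2 + ψ ^ 2)) / (1 + (s * (η - a)) ^ 2) := by field_simp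
    rw [this, le_div_iff₀ e, mul_pow]
    refine hker.trans ?_
    gcongr
  have hgs : g / s ≤ g := div_le_self hg0.le hs
  -- covers the terms with `c = s ^ 2` and `c = η`
  have main : ∀ c, 0 ≤ c → c ≤ W → c * (q * s) * K ≤ 100 * P * (s * g) := by
    intro c hc hcW
    calc c * (q * s) * K ≤ W * (P * W) * K := by gcongr
      _ = P * (W ^ 2 * K) := by ring
      _ ≤ P * (100 * s * g) := by gcongr
      _ = _ := by ring
  have t1 : s ^ 2 * K * q ≤ 100 * P * g := by
    have := main (s ^ 2) (by positivity) (by linarith)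
    refine le_of_mul_le_mul_right (a := s) ?_ hs0
    linarith
  have t2 : |6 * η * (s ^ 2 - ψ ^ 2) * K ^ 2| * q ≤ 600 * P * g := by
    have h1 := main η hη.le (by linarith [sq_nonneg s])
    have h2 : |6 * η * (s ^ 2 - ψ ^ 2) * K ^ 2| ≤ 6 * η * K := by
      have h3 : |s ^ 2 - ψ ^ 2| ≤ s ^ 2 + ψ ^ 2 := by
        rw [abs_le]; constructor <;> linarith [sq_nonneg s, sq_nonneg ψ]
      rw [abs_mul, abs_mul, abs_of_pos (show 0 < 6 * η by positivity),
        abs_of_pos (show 0 < K ^ 2 by positivity)]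
      calc 6 * η * |s ^ 2 - ψ ^ 2| * K ^ 2 ≤ 6 * η * (s ^ 2 + ψ ^ 2) * K ^ 2 := by gcongr
        _ = 6 * η * K * (K * (s ^ 2 + ψ ^ 2)) := by ring
        _ = _ := by rw [hKD, mul_one]
    calc _ ≤ 6 * η * K * q := by gcongr
      _ ≤ _ := by
        refine le_of_mul_le_mul_right (a := s) ?_ hs0
        linarith
  set A := |ψ * K| with hA
  have hA0 : 0 ≤ A := abs_nonneg _
  have hAK : A ^ 2 ≤ K := by
    rw [hA, sq_abs]
    have : ψ ^ 2 * K ≤ 1 := by linarith [mul_nonneg hK0.le (sq_nonneg s)]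
    calc (ψ * K) ^ 2 = ψ ^ 2 * K * K := by ring
      _ ≤ 1 * K := by gcongr
      _ = K := one_mul _
  have hAs : A ≤ s⁻¹ := by
    have : K ≤ (s⁻¹) ^ 2 := by
      rw [hK, inv_pow]; apply inv_anti₀ (by positivity); linarith [sq_nonneg ψ]
    exact abs_le_of_sq_le_sq' (hAK.trans this) (by positivity) |>.2
  have hAq : (A * q) ^ 2 ≤ 100 * P ^ 2 * g := by
    have h1 : (q * s) ^ 2 ≤ (P * W) ^ 2 := by gcongr
    have h2 : (A * q) ^ 2 * s ^ 2 ≤ 100 * P ^ 2 * g * s ^ 2 := by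
      calc (A * q) ^ 2 * s ^ 2 = A ^ 2 * (q * s) ^ 2 := by ring
        _ ≤ K * (P * W) ^ 2 := by gcongr
        _ = P ^ 2 * (W ^ 2 * K) := by ring
        _ ≤ P ^ 2 * (100 * s * g) := by gcongr
        _ = 100 * P ^ 2 * g * s := by ring
        _ ≤ 100 * P ^ 2 * g * s ^ 2 := by gcongr; exact le_self_pow₀ hs two_ne_zero
    exact le_of_mul_le_mul_right h2 (by positivity)
  have t4 : A * q * z ≤ P * (z ^ 2 / 2 + 50 * g) := amgm_weight hP hAq
  have t3 : A * (β * η ^ (β - 1)) ≤ P * (50 * g +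
      (Set.Ioc (0:ℝ) 1).indicator (fun v => β * v ^ (β - 1)) η + (1 + η ^ 2)⁻¹) := by
    have hinv : 0 < (1 + η ^ 2)⁻¹ := by positivity
    rcases le_or_gt η 1 with h | h
    · rw [Set.indicator_of_mem (Set.mem_Ioc.2 ⟨hη, h⟩)]
      have h0 : 0 ≤ β * η ^ (β - 1) := by positivity
      have : A * (β * η ^ (β - 1)) ≤ P * (β * η ^ (β - 1)) := by
        gcongr; exact hAs.trans hPs
      linarith [mul_pos hP hg0, mul_pos hP hinv]
    · rw [Set.indicator_of_notMem (by simp [h])]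
      have h1 := amgm_weight (z := η⁻¹) hP hAq
      have h2 : (η⁻¹) ^ 2 / 2 ≤ (1 + η ^ 2)⁻¹ := half_inv_sq_le h.le
      calc A * (β * η ^ (β - 1)) ≤ A * (1 * η ^ (β - 1)) := by gcongr
        _ = A * q * η⁻¹ := by rw [hqd]; ring
        _ ≤ _ := h1
        _ ≤ _ := mul_le_mul_of_nonneg_left (by linarith) hP.le
  linarith [mul_nonneg hP.le (sq_nonneg z), mul_pos hP hg0]

lemma integral_lorentz {s : ℝ} (hs : 0 < s) (a : ℝ) :
    Integrable (fun η : ℝ => s * (1 + (s * (η - a)) ^ 2)⁻¹) ∧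
      ∫ η : ℝ, s * (1 + (s * (η - a)) ^ 2)⁻¹ = π := by
  constructor
  · exact ((integrable_inv_one_add_sq.comp_mul_left' hs.ne').comp_sub_right a).const_mul s
  · rw [integral_const_mul, integral_sub_right_eq_self (fun v : ℝ => (1 + (s * v) ^ 2)⁻¹) a,
      Measure.integral_comp_mul_left (fun v : ℝ => (1 + v ^ 2)⁻¹), integral_univ_inv_one_add_sq,
      abs_of_pos (by positivity), smul_eq_mul]
    field_simp

lemma integral_rpow_unit {β : ℝ} (hβ : 0 ≤ β) :
    Integrable ((Set.Ioc (0:ℝ) 1).indicator (fun v => β * v ^ (β - 1))) ∧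
      ∫ η, (Set.Ioc (0:ℝ) 1).indicator (fun v => β * v ^ (β - 1)) η ≤ 1 := by
  rcases hβ.eq_or_lt with rfl | h
  · simp
  · have h1 : IntervalIntegrable (fun v : ℝ => v ^ (β - 1)) volume 0 1 :=
      intervalIntegral.intervalIntegrable_rpow' (by linarith)
    constructor
    · rw [integrable_indicator_iff measurableSet_Ioc]
      exact ((intervalIntegrable_iff_integrableOn_Ioc_of_le zero_le_one).1 h1).const_mul β
    · rw [integral_indicator measurableSet_Ioc, ← intervalIntegral.integral_of_le zero_le_one,
        intervalIntegral.integral_const_mul, integral_rpow (Or.inl (by linarith))]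
      simp [h.ne']
/-! ### The half-line estimate -/

lemma integrable_amplitude {β : ℝ} (hβ0 : 0 ≤ β) (hβ1 : β ≤ 1) {H : ℝ → ℂ} (hH : Continuous H)
    (hb : ∀ η, ‖H η‖ ≤ 1) {M : ℝ} (hM : ∀ η, 0 < η → η ^ 3 * ‖H η‖ ≤ M) {e : ℝ → ℂ}
    (he : Continuous e) (hen : ∀ η, ‖e η‖ = 1) :
    IntegrableOn (fun η => e η * ((η ^ β : ℝ) : ℂ) * H η) (Set.Ioi 0) := by
  have hg : IntegrableOn (fun η : ℝ => (2 + 2 * M) * (1 + η ^ 2)⁻¹) (Set.Ioi 0) :=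
    (integrable_inv_one_add_sq.const_mul _).integrableOn
  refine hg.mono' ?_ ?_
  · have := (Real.continuous_rpow_const hβ0)
    exact (by fun_prop : Continuous fun η : ℝ => e η * ((η ^ β : ℝ) : ℂ) * H η).aestronglyMeasurable
  · filter_upwards [ae_restrict_mem measurableSet_Ioi] with η hη
    have hη : 0 < η := hη
    rw [norm_mul, norm_mul, hen, one_mul, Complex.norm_real, Real.norm_of_nonneg (by positivity),
      ← div_eq_mul_inv, le_div_iff₀ (by positivity)]
    have h1 := hM η hη
    have h2 := hb η
    have h0 := norm_nonneg (H η)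
    rcases le_total η 1 with h | h
    · have : η ^ β ≤ 1 := Real.rpow_le_one hη.le h hβ0
      have h3 : η ^ β * ‖H η‖ ≤ 1 * 1 := by gcongr
      have h4 : 0 ≤ M := le_trans (by positivity) h1
      have h5 : 1 + η ^ 2 ≤ 2 := by nlinarith
      have h6 : η ^ β * ‖H η‖ * (1 + η ^ 2) ≤ (1 * 1) * 2 := by gcongr
      linarith
    · have : η ^ β ≤ η := by
        simpa using Real.rpow_le_rpow_of_exponent_le h hβ1
      have h3 : η ^ β * ‖H η‖ * (1 + η ^ 2) ≤ η * ‖H η‖ * (1 + η ^ 2) := by gcongr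
      have h4 : η * ‖H η‖ ≤ η ^ 3 * ‖H η‖ := by
        gcongr; exact le_self_pow₀ h (by norm_num)
      have h7 : η * ‖H η‖ * (1 + η ^ 2) = η * ‖H η‖ + η ^ 3 * ‖H η‖ := by ring
      linarith

/-- The rescaled estimate on `(0, ∞)`; `ω` is `i` or `-i`. The bound `M` only serves to make the
integrals converge and does not enter the estimate. -/
lemma half_line_bound {ω : ℂ} (hω : ω * ω = -1) (hωn : ∀ r : ℝ, ‖cexp (ω * r)‖ = 1)
    (y : ℝ) {β : ℝ} (hβ0 : 0 ≤ β) (hβ1 : β ≤ 1) {H H' : ℝ → ℂ}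
    (hH : ∀ η, HasDerivAt H (H' η) η) (hH'c : Continuous H') (hb : ∀ η, ‖H η‖ ≤ 1)
    {M : ℝ} (hM : ∀ η, 0 < η → η ^ 3 * ‖H η‖ ≤ M)
    (hI : Integrable (fun η => ‖H' η‖ ^ 2)) (hI1 : ∫ η, ‖H' η‖ ^ 2 ≤ 1) :
    ‖∫ η in Set.Ioi (0:ℝ), cexp (ω * ((y * η + η ^ 3 : ℝ) : ℂ)) * ((η ^ β : ℝ) : ℂ) * H η‖ ≤
      (801 * π + 3) * (1 + |y|) ^ (-(1:ℝ)/4 + β/2) := by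
  have hω1 : ‖ω‖ = 1 := by
    have : ‖ω‖ * ‖ω‖ = 1 := by rw [← norm_mul, hω]; simp
    nlinarith [norm_nonneg ω]
  set s : ℝ := (1 + |y|) ^ ((1:ℝ)/4) with hsdef
  have hy0 : 0 < 1 + |y| := by positivity
  have hs : 1 ≤ s := Real.one_le_rpow (by linarith [abs_nonneg y]) (by norm_num)
  have hs0 : 0 < s := by linarith
  have hs4 : s ^ 4 = 1 + |y| := by
    rw [hsdef, ← Real.rpow_natCast, ← Real.rpow_mul hy0.le]; norm_num
  set a : ℝ := √(|y| / 3) with hadef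
  have ha : 0 ≤ a := Real.sqrt_nonneg _
  have hya : |y| = 3 * a ^ 2 := by rw [hadef, Real.sq_sqrt (by positivity)]; ring
  have hsa : s ^ 4 = 1 + 3 * a ^ 2 := by rw [hs4, hya]
  have hP : (1 + |y|) ^ (-(1:ℝ)/4 + β/2) = s ^ (2 * β - 1) := by
    rw [hsdef, ← Real.rpow_mul hy0.le]; congr 1; ring
  rw [hP]
  set P := s ^ (2 * β - 1) with hPdef
  have hP0 : 0 < P := by positivity
  have hHc : Continuous H := continuous_iff_continuousAt.2 fun η => (hH η).continuousAt
  set e : ℝ → ℂ := fun η => cexp (ω * ((y * η + η ^ 3 : ℝ) : ℂ)) with he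
  have hec : Continuous e := by rw [he]; fun_prop
  have hen : ∀ η, ‖e η‖ = 1 := fun η => hωn _
  set ψ : ℝ → ℝ := fun η => 3 * η ^ 2 + y with hψ
  set K : ℝ → ℝ := fun η => (s ^ 2 + ψ η ^ 2)⁻¹ with hK
  have hD : ∀ η, 0 < s ^ 2 + ψ η ^ 2 := fun η => by positivity
  have hψc : Continuous ψ := by rw [hψ]; fun_prop
  have hKc : Continuous K := Continuous.inv₀ (by fun_prop) fun η => (hD η).ne'
  have hqc : Continuous fun η : ℝ => η ^ β := Real.continuous_rpow_const hβ0
  set A' : ℝ → ℝ := fun η => 6 * η * (s ^ 2 - ψ η ^ 2) * (K η) ^ 2 with hA'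
  have hA'c : Continuous A' := by rw [hA']; fun_prop
  set E : ℝ → ℂ := fun η => e η * ((η ^ β : ℝ) : ℂ) * H η with hE
  -- the integrand `E` equals `-ω F' + R`
  set R : ℝ → ℂ := fun η => ((s ^ 2 * K η : ℝ) : ℂ) * E η +
    ω * (((A' η : ℝ) : ℂ) * E η + ((ψ η * K η : ℝ) : ℂ) * e η * ((β * η ^ (β - 1) : ℝ) : ℂ) * H η
      + ((ψ η * K η : ℝ) : ℂ) * e η * ((η ^ β : ℝ) : ℂ) * H' η) with hR
  set F : ℝ → ℂ := fun η => ((ψ η * K η : ℝ) : ℂ) * E η with hF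
  set B : ℝ → ℝ := fun η => P * (800 * (s * (1 + (s * (η - a)) ^ 2)⁻¹) +
      (Set.Ioc (0:ℝ) 1).indicator (fun v => β * v ^ (β - 1)) η + (1 + η ^ 2)⁻¹ + ‖H' η‖ ^ 2) with hB
  obtain ⟨hg1, hg2⟩ := integral_lorentz hs0 a
  obtain ⟨hr1, hr2⟩ := integral_rpow_unit hβ0
  have hj := integrable_inv_one_add_sq
  have i1 := hg1.const_mul 800
  have i2 : Integrable fun η : ℝ => 800 * (s * (1 + (s * (η - a)) ^ 2)⁻¹) +
      (Set.Ioc (0:ℝ) 1).indicator (fun v => β * v ^ (β - 1)) η := i1.add hr1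
  have i3 : Integrable fun η : ℝ => 800 * (s * (1 + (s * (η - a)) ^ 2)⁻¹) +
      (Set.Ioc (0:ℝ) 1).indicator (fun v => β * v ^ (β - 1)) η + (1 + η ^ 2)⁻¹ := i2.add hj
  have hBi : Integrable B := (i3.add hI).const_mul P
  have hBint : ∫ η, B η ≤ P * (801 * π + 2) := by
    rw [hB, integral_const_mul, integral_add i3 hI, integral_add i2 hj, integral_add i1 hr1,
      integral_const_mul, hg2, integral_univ_inv_one_add_sq]
    exact mul_le_mul_of_nonneg_left (by linarith) hP0.le
  have hB0 : ∀ η, 0 ≤ B η := by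
    intro η
    have : 0 ≤ (Set.Ioc (0:ℝ) 1).indicator (fun v => β * v ^ (β - 1)) η :=
      Set.indicator_nonneg (fun v hv => by have := hv.1; positivity) η
    rw [hB]; positivity
  have hRB : ∀ η, 0 < η → ‖R η‖ ≤ B η := by
    intro η hη
    refine le_trans ?_ (remainder_bound (z := ‖H' η‖) hs ha hsa hya hβ0 hβ1 hη)
    have hq : 0 ≤ η ^ β := by positivity
    have hq' : 0 ≤ β * η ^ (β - 1) := by positivity
    have hEn : ‖E η‖ ≤ η ^ β := by
      rw [hE]; simp only [norm_mul, hen, one_mul, Complex.norm_real, Real.norm_of_nonneg hq]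
      exact mul_le_of_le_one_right hq (hb η)
    have hK0 : 0 ≤ s ^ 2 * K η := by have := hD η; positivity
    have n1 : ‖((s ^ 2 * K η : ℝ) : ℂ) * E η‖ ≤ s ^ 2 * K η * η ^ β := by
      rw [norm_mul, Complex.norm_real, Real.norm_of_nonneg hK0]; gcongr
    have n2 : ‖((A' η : ℝ) : ℂ) * E η‖ ≤ |A' η| * η ^ β := by
      rw [norm_mul, Complex.norm_real, Real.norm_eq_abs]; gcongr
    have n3 : ‖((ψ η * K η : ℝ) : ℂ) * e η * ((β * η ^ (β - 1) : ℝ) : ℂ) * H η‖ ≤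
        |ψ η * K η| * (β * η ^ (β - 1)) := by
      rw [norm_mul, norm_mul, norm_mul, hen, Complex.norm_real, Complex.norm_real,
        Real.norm_of_nonneg hq', Real.norm_eq_abs, mul_one]
      exact mul_le_of_le_one_right (by positivity) (hb η)
    have n4 : ‖((ψ η * K η : ℝ) : ℂ) * e η * ((η ^ β : ℝ) : ℂ) * H' η‖ =
        |ψ η * K η| * η ^ β * ‖H' η‖ := by
      rw [norm_mul, norm_mul, norm_mul, hen, Complex.norm_real, Complex.norm_real,
        Real.norm_of_nonneg hq, Real.norm_eq_abs, mul_one]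
    change ‖R η‖ ≤ s ^ 2 * K η * η ^ β + |A' η| * η ^ β + |ψ η * K η| * (β * η ^ (β - 1)) +
      |ψ η * K η| * η ^ β * ‖H' η‖
    refine (norm_add_le _ _).trans ?_
    rw [norm_mul ω, hω1, one_mul]
    have n5 := norm_add₃_le (a := ((A' η : ℝ) : ℂ) * E η)
      (b := ((ψ η * K η : ℝ) : ℂ) * e η * ((β * η ^ (β - 1) : ℝ) : ℂ) * H η)
      (c := ((ψ η * K η : ℝ) : ℂ) * e η * ((η ^ β : ℝ) : ℂ) * H' η)
    linarith
  have hEi : IntegrableOn E (Set.Ioi 0) := integrable_amplitude hβ0 hβ1 hHc hb hM hec hen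
  have hRm : Measurable R := by
    have := hec.measurable
    have := hKc.measurable
    have := hψc.measurable
    have := hA'c.measurable
    have := hHc.measurable
    have := hH'c.measurable
    rw [hR, hE]; fun_prop
  have hRi : IntegrableOn R (Set.Ioi 0) := by
    refine hBi.integrableOn.mono' hRm.aestronglyMeasurable ?_
    filter_upwards [ae_restrict_mem measurableSet_Ioi] with η hη using hRB η hη
  have hFd : ∀ η ∈ Set.Ioi (0:ℝ), HasDerivAt F (ω * (E η - R η)) η := by
    intro η hη
    have hη : 0 < η := hη
    have d1 : HasDerivAt ψ (6 * η) η := by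
      have := ((hasDerivAt_pow 2 η).const_mul 3).add_const y
      convert! this using 1; ring
    have d2 : HasDerivAt (fun v => ψ v * K v) (A' η) η := by
      have := d1.mul (((d1.pow 2).const_add (s ^ 2)).inv (hD η).ne')
      convert! this using 1
      have := (hD η).ne'
      simp only [hA', hK, Pi.inv_apply, Pi.pow_apply]
      field_simp
      ring
    have d3 : HasDerivAt (fun v : ℝ => v ^ β) (β * η ^ (β - 1)) η :=
      Real.hasDerivAt_rpow_const (Or.inl hη.ne')
    have d4 : HasDerivAt e (ω * (ψ η : ℂ) * e η) η := by
      have h0 : HasDerivAt (fun v : ℝ => y * v + v ^ 3) (ψ η) η := by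
        have := ((hasDerivAt_id η).const_mul y).add (hasDerivAt_pow 3 η)
        convert! this using 1; simp [hψ]; ring
      have := ((h0.ofReal_comp).const_mul ω).cexp
      convert! this using 1; simp only [he]; ring
    have := d2.ofReal_comp.mul ((d4.mul d3.ofReal_comp).mul (hH η))
    convert! this using 1
    simp only [hR, hE, Pi.mul_apply]
    have hk : ((s ^ 2 * K η : ℝ) : ℂ) = 1 - (ψ η : ℂ) * ((ψ η * K η : ℝ) : ℂ) := by
      rw [← Complex.ofReal_mul, ← Complex.ofReal_one, ← Complex.ofReal_sub]
      congr 1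
      have := (hD η).ne'
      simp only [hK]; field_simp; ring
    rw [hk]
    linear_combination (-(((A' η : ℝ) : ℂ) * (e η * ((η ^ β : ℝ) : ℂ) * H η) + ((ψ η * K η : ℝ) : ℂ) * e η * ((β * η ^ (β - 1) : ℝ) : ℂ) * H η
      + ((ψ η * K η : ℝ) : ℂ) * e η * ((η ^ β : ℝ) : ℂ) * H' η)) * hω
  have hF'i : IntegrableOn (fun η => ω * (E η - R η)) (Set.Ioi 0) := (hEi.sub hRi).const_mul ω
  have hEc : Continuous E := by rw [hE]; fun_prop
  have hFc : Continuous F := by rw [hF]; fun_prop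
  have hψK : ∀ η, |ψ η * K η| ≤ s⁻¹ := by
    intro η
    have h1 := hD η
    rw [abs_mul, abs_of_pos (show 0 < K η by positivity)]
    simp only [hK]
    rw [← div_eq_mul_inv, div_le_iff₀ h1, ← div_eq_inv_mul, le_div_iff₀ hs0]
    nlinarith [sq_abs (ψ η), sq_nonneg (|ψ η| - s), abs_nonneg (ψ η)]
  have hFi : IntegrableOn F (Set.Ioi 0) := by
    refine (hEi.norm.const_mul s⁻¹).mono' hFc.aestronglyMeasurable (Filter.Eventually.of_forall ?_)
    intro η
    rw [norm_mul, Complex.norm_real, Real.norm_eq_abs]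
    gcongr; exact hψK η
  have hF0 : ‖F 0‖ ≤ P := by
    have h1 : ‖F 0‖ ≤ s⁻¹ * 1 := by
      rw [norm_mul, Complex.norm_real, Real.norm_eq_abs]
      gcongr
      · exact hψK 0
      · simp only [hE, norm_mul, hen, one_mul, Complex.norm_real]
        have : ‖(0:ℝ) ^ β‖ ≤ 1 := by
          rw [Real.norm_of_nonneg (by positivity)]; exact Real.zero_rpow_le_one β
        exact mul_le_one₀ this (norm_nonneg _) (hb 0)
    have h2 : s⁻¹ ≤ P := by
      rw [hPdef, ← Real.rpow_neg_one]
      exact Real.rpow_le_rpow_of_exponent_le hs (by linarith)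
    linarith
  have hFt := tendsto_zero_of_hasDerivAt_of_integrableOn_Ioi hFd hF'i hFi
  have hFTC := integral_Ioi_of_hasDerivAt_of_tendsto hFc.continuousWithinAt hFd hF'i hFt
  rw [integral_const_mul, integral_sub hEi hRi] at hFTC
  have hEeq : ∫ η in Set.Ioi (0:ℝ), E η = (∫ η in Set.Ioi (0:ℝ), R η) + ω * F 0 := by
    linear_combination (-ω) * hFTC + ((∫ η in Set.Ioi (0:ℝ), E η) - ∫ η in Set.Ioi (0:ℝ), R η) * hω
  have hRn : ‖∫ η in Set.Ioi (0:ℝ), R η‖ ≤ P * (801 * π + 2) := by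
    calc _ ≤ ∫ η in Set.Ioi (0:ℝ), B η := by
          refine norm_integral_le_of_norm_le hBi.integrableOn ?_
          filter_upwards [ae_restrict_mem measurableSet_Ioi] with η hη using hRB η hη
      _ ≤ ∫ η, B η := setIntegral_le_integral hBi (Filter.Eventually.of_forall hB0)
      _ ≤ _ := hBint
  rw [hEeq]
  refine (norm_add_le _ _).trans ?_
  rw [norm_mul, hω1, one_mul]
  linarith

/-! ### The whole line -/

/-- The rescaled estimate (`t = 1`) on the whole line. The weight `w` equals `κ₁ |η|^β` on the
positive and `κ₂ |η|^β` on the negative half-line; the reflection `η ↦ -η` conjugates the phase. -/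
lemma line_bound (y : ℝ) {β : ℝ} (hβ0 : 0 ≤ β) (hβ1 : β ≤ 1) {H H' : ℝ → ℂ}
    (hH : ∀ η, HasDerivAt H (H' η) η) (hH'c : Continuous H') (hb : ∀ η, ‖H η‖ ≤ 1)
    {M : ℝ} (hM : ∀ η, |η| ^ 3 * ‖H η‖ ≤ M)
    (hI : Integrable (fun η => ‖H' η‖ ^ 2)) (hI1 : ∫ η, ‖H' η‖ ^ 2 ≤ 1)
    {w : ℝ → ℂ} {κ₁ κ₂ : ℂ} (hκ₁ : ‖κ₁‖ ≤ 1) (hκ₂ : ‖κ₂‖ ≤ 1)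
    (hw₁ : ∀ η, 0 < η → w η = κ₁ * ((η ^ β : ℝ) : ℂ))
    (hw₂ : ∀ η, 0 < η → w (-η) = κ₂ * ((η ^ β : ℝ) : ℂ)) :
    ‖∫ η : ℝ, cexp (I * ((y * η + η ^ 3 : ℝ) : ℂ)) * w η * H η‖ ≤
      2 * (801 * π + 3) * (1 + |y|) ^ (-(1:ℝ)/4 + β/2) := by
  by_cases hint : Integrable fun η : ℝ => cexp (I * ((y * η + η ^ 3 : ℝ) : ℂ)) * w η * H η
  swap
  · rw [integral_undef hint, norm_zero]; positivity
  have hp := half_line_bound (ω := I) I_mul_I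
    (fun r => by rw [mul_comm]; exact Complex.norm_exp_ofReal_mul_I r) y hβ0 hβ1 hH hH'c hb
    (M := M) (fun η hη => by simpa [abs_of_pos hη] using hM η) hI hI1
  have hn := half_line_bound (ω := -I) (by simp)
    (fun r => by
      have := Complex.norm_exp_ofReal_mul_I (-r)
      rw [← this]; congr 2; push_cast; ring) y hβ0 hβ1
    (H := fun η => H (-η)) (H' := fun η => -H' (-η))
    (fun η => by
      have := (hH (-η)).scomp η (hasDerivAt_neg η)
      simpa using! this) (by fun_prop) (fun η => hb _)
    (M := M) (fun η hη => by simpa [abs_of_pos hη] using hM (-η))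
    (by simpa using hI.comp_neg)
    (by
      simp only [norm_neg]
      rw [integral_neg_eq_self (fun η => ‖H' η‖ ^ 2)]; exact hI1)
  rw [← intervalIntegral.integral_Iic_add_Ioi (b := 0) hint.integrableOn hint.integrableOn]
  have e1 : ∫ η in Set.Ioi (0:ℝ), cexp (I * ((y * η + η ^ 3 : ℝ) : ℂ)) * w η * H η =
      κ₁ * ∫ η in Set.Ioi (0:ℝ), cexp (I * ((y * η + η ^ 3 : ℝ) : ℂ)) * ((η ^ β : ℝ) : ℂ) * H η := by
    rw [← integral_const_mul]
    refine setIntegral_congr_fun measurableSet_Ioi fun η hη => ?_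
    simp only [hw₁ η hη]; ring
  have e2 : ∫ η in Set.Iic (0:ℝ), cexp (I * ((y * η + η ^ 3 : ℝ) : ℂ)) * w η * H η =
      κ₂ * ∫ η in Set.Ioi (0:ℝ),
        cexp (-I * ((y * η + η ^ 3 : ℝ) : ℂ)) * ((η ^ β : ℝ) : ℂ) * H (-η) := by
    rw [← integral_const_mul, ← neg_zero,
      ← integral_comp_neg_Ioi 0 (fun η : ℝ => cexp (I * ((y * η + η ^ 3 : ℝ) : ℂ)) * w η * H η),
      neg_zero]
    refine setIntegral_congr_fun measurableSet_Ioi fun η hη => ?_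
    have : I * ((y * -η + (-η) ^ 3 : ℝ) : ℂ) = -I * ((y * η + η ^ 3 : ℝ) : ℂ) := by
      push_cast; ring
    simp only [hw₂ η hη, this]; ring
  rw [e1, e2]
  refine (norm_add_le _ _).trans ?_
  rw [norm_mul, norm_mul]
  have m1 := mul_le_mul hκ₁ hp (norm_nonneg _) zero_le_one
  have m2 := mul_le_mul hκ₂ hn (norm_nonneg _) zero_le_one
  linarith

/-! ### Fourier transform and rescaling -/

open FourierTransform in
lemma FT_eq (g : ℝ → ℂ) (ξ : ℝ) :
    FT g ξ = (Real.sqrt (2 * Real.pi) : ℂ)⁻¹ * 𝓕 g ((2 * π)⁻¹ * ξ) := by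
  rw [FT, Real.fourier_real_eq_integral_exp_smul]
  congr 2
  ext x
  rw [smul_eq_mul]
  congr 2
  push_cast
  field_simp

open FourierTransform in
/-- The transform of a Schwartz function is bounded and decays, and its derivative, the transform
of `-i x f`, has the same `L²` norm as `x f`. -/
lemma FT_schwartz (f : SchwartzMap ℝ ℂ) :
    BddAbove (Set.range fun ξ => ‖FT f ξ‖) ∧ (∃ M, ∀ ξ, |ξ| ^ 3 * ‖FT f ξ‖ ≤ M) ∧
    ∃ D : ℝ → ℂ, (∀ ξ, HasDerivAt (FT f) (D ξ) ξ) ∧ Continuous D ∧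
      Integrable (fun ξ => ‖D ξ‖ ^ 2) ∧ ∫ ξ, ‖D ξ‖ ^ 2 = ∫ x : ℝ, ‖(x : ℂ) * f x‖ ^ 2 := by
  have hpi : 0 < 2 * π := by positivity
  have hr : ‖(Real.sqrt (2 * Real.pi) : ℂ)⁻¹‖ = (√(2 * π))⁻¹ := by
    rw [norm_inv, Complex.norm_real, Real.norm_of_nonneg (Real.sqrt_nonneg _)]
  have hr2 : (√(2 * π))⁻¹ ^ 2 = (2 * π)⁻¹ := by
    rw [inv_pow, Real.sq_sqrt hpi.le]
  set r : ℂ := (Real.sqrt (2 * Real.pi) : ℂ)⁻¹ with hrdef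
  have hFT : FT f = fun ξ => r * (𝓕 f : SchwartzMap ℝ ℂ) ((2 * π)⁻¹ * ξ) := by
    ext ξ; rw [FT_eq]; rfl
  let g : SchwartzMap ℝ ℂ := SchwartzMap.smulLeftCLM ℂ (fun x : ℝ => (x : ℂ)) f
  have hg : ∀ x, g x = (x : ℂ) * f x := fun x => by
    simp only [g]
    rw [SchwartzMap.smulLeftCLM_apply_apply (by fun_prop), smul_eq_mul]
  have hd : ∀ w, HasDerivAt (𝓕 f : SchwartzMap ℝ ℂ) (-2 * π * I * (𝓕 g : SchwartzMap ℝ ℂ) w) w := by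
    intro w
    have h1 : Integrable fun x : ℝ => x • f x := by
      have := g.integrable (μ := volume)
      refine this.congr (Filter.Eventually.of_forall fun x => ?_)
      simp [hg]
    have := Real.hasDerivAt_fourier f.integrable h1 w
    convert! this using 1
    rw [SchwartzMap.fourier_coe, Real.fourier_real_eq, Real.fourier_real_eq, ← integral_const_mul]
    congr 1; ext x
    simp only [hg, Circle.smul_def, smul_eq_mul]; ring
  refine ⟨?_, ?_, fun ξ => -I * r * (𝓕 g : SchwartzMap ℝ ℂ) ((2 * π)⁻¹ * ξ), ?_, ?_, ?_, ?_⟩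
  · obtain ⟨C, hC⟩ := (𝓕 f : SchwartzMap ℝ ℂ).decay 0 0
    refine ⟨‖r‖ * C, ?_⟩
    rintro _ ⟨ξ, rfl⟩
    have := hC.2 ((2 * π)⁻¹ * ξ)
    simp only [hFT, norm_mul r]
    gcongr
    simpa using this
  · obtain ⟨C, hC⟩ := (𝓕 f : SchwartzMap ℝ ℂ).decay 3 0
    refine ⟨(2 * π) ^ 3 * (‖r‖ * C), fun ξ => ?_⟩
    have := hC.2 ((2 * π)⁻¹ * ξ)
    simp only [norm_iteratedFDeriv_zero] at this
    have h2 : |ξ| ^ 3 = (2 * π) ^ 3 * ‖(2 * π)⁻¹ * ξ‖ ^ 3 := by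
      rw [norm_mul, Real.norm_of_nonneg (by positivity), Real.norm_eq_abs]; field_simp
    rw [hFT, h2, norm_mul r]
    calc _ = (2 * π) ^ 3 * (‖r‖ * (‖(2 * π)⁻¹ * ξ‖ ^ 3 *
          ‖(𝓕 f : SchwartzMap ℝ ℂ) ((2 * π)⁻¹ * ξ)‖)) := by ring
      _ ≤ _ := by gcongr
  · intro ξ
    have := ((hd ((2 * π)⁻¹ * ξ)).scomp ξ ((hasDerivAt_id ξ).const_mul (2 * π)⁻¹)).const_mul r
    rw [hFT]
    convert! this using 1
    simp only [mul_one, Complex.real_smul]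
    push_cast
    field_simp
  · have := (𝓕 g : SchwartzMap ℝ ℂ).continuous
    fun_prop
  · have h1 : Integrable fun ξ : ℝ => ‖(𝓕 g : SchwartzMap ℝ ℂ) ξ‖ ^ 2 := by
      have := (𝓕 g : SchwartzMap ℝ ℂ).memLp 2 (μ := volume)
      exact this.integrable_norm_pow two_ne_zero
    have h2 := (h1.comp_mul_left' (inv_pos.2 hpi).ne').const_mul (‖-I * r‖ ^ 2)
    refine h2.congr (Filter.Eventually.of_forall fun ξ => ?_)
    simp only [norm_mul _ ((𝓕 g : SchwartzMap ℝ ℂ) _), mul_pow]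
  · simp only [norm_mul _ ((𝓕 g : SchwartzMap ℝ ℂ) _), mul_pow]
    rw [integral_const_mul, Measure.integral_comp_mul_left
      (fun ξ => ‖(𝓕 g : SchwartzMap ℝ ℂ) ξ‖ ^ 2), SchwartzMap.integral_norm_sq_fourier]
    simp only [hg, norm_mul, norm_neg, norm_I, one_mul, hr, hr2, inv_inv, smul_eq_mul,
      abs_of_pos hpi]
    field_simp

/-- Both claims at once: `w = |ξ|^β` has `κ₁ = κ₂ = 1`, while `w = iξ` has `β = 1`, `κ₁ = i`,
`κ₂ = -i`. The proof is the change of variables `ξ = c η`, `c = t^(-1/3)`. -/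
lemma airy_bound {t : ℝ} (ht : 1 ≤ t) {f : SchwartzMap ℝ ℂ}
    (hf : LinfNorm (FT ⇑f) + t ^ (-(1:ℝ)/6) * L2norm (fun x => (x : ℂ) * f x) ≤ 1)
    {β : ℝ} (hβ0 : 0 ≤ β) (hβ1 : β ≤ 1) (x : ℝ)
    {w : ℝ → ℂ} {κ₁ κ₂ : ℂ} (hκ₁ : ‖κ₁‖ ≤ 1) (hκ₂ : ‖κ₂‖ ≤ 1)
    (hw₁ : ∀ η, 0 < η → w η = κ₁ * ((η ^ β : ℝ) : ℂ))
    (hw₂ : ∀ η, 0 < η → w (-η) = κ₂ * ((η ^ β : ℝ) : ℂ)) :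
    ‖(Real.sqrt (2 * Real.pi) : ℂ)⁻¹ *
      ∫ ξ : ℝ, cexp (I * (x * ξ + t * ξ ^ 3)) * w ξ * FT f ξ‖ ≤
      2 * (801 * π + 3) * t ^ (-(1:ℝ)/3 - β/3) *
        (1 + |x| / t ^ ((1:ℝ)/3)) ^ (-(1:ℝ)/4 + β/2) := by
  have ht0 : 0 < t := by linarith
  obtain ⟨hbdd, ⟨M, hM⟩, D, hD, hDc, hDi, hDint⟩ := FT_schwartz f
  have hL2 : 0 ≤ L2norm (fun x => (x : ℂ) * f x) := Real.sqrt_nonneg _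
  have hLinf : 0 ≤ LinfNorm (FT f) := Real.iSup_nonneg fun _ => norm_nonneg _
  have ht6 : 0 < t ^ (-(1:ℝ)/6) := by positivity
  have hb : ∀ ξ, ‖FT f ξ‖ ≤ 1 := fun ξ => by
    have h1 : ‖FT f ξ‖ ≤ LinfNorm (FT f) := le_ciSup hbdd ξ
    have h2 := mul_nonneg ht6.le hL2
    linarith
  set c : ℝ := t ^ (-(1:ℝ)/3) with hc
  have hc0 : 0 < c := by positivity
  have hc3 : t * c ^ 3 = 1 := by
    rw [hc, ← Real.rpow_natCast, ← Real.rpow_mul ht0.le]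
    norm_num
    rw [Real.rpow_neg_one, mul_inv_cancel₀ ht0.ne']
  have hcL : c * ∫ x : ℝ, ‖(x : ℂ) * f x‖ ^ 2 ≤ 1 := by
    have h1 : (t ^ (-(1:ℝ)/6) * L2norm (fun x => (x : ℂ) * f x)) ^ 2 ≤ 1 := by
      apply pow_le_one₀ (by positivity); linarith
    have h2 : (t ^ (-(1:ℝ)/6)) ^ 2 = c := by
      rw [hc, ← Real.rpow_natCast, ← Real.rpow_mul ht0.le]; norm_num
    rwa [mul_pow, h2, L2norm, Real.sq_sqrt (integral_nonneg fun _ => by positivity)] at h1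
  have hcc : ∀ η : ℝ, ‖(c : ℂ) * D (c * η)‖ ^ 2 = c ^ 2 * ‖D (c * η)‖ ^ 2 := fun η => by
    rw [norm_mul, Complex.norm_real, Real.norm_of_nonneg hc0.le, mul_pow]
  have hcβ : 0 < c ^ β := by positivity
  have key := line_bound (x * c) hβ0 hβ1 (H := fun η => FT f (c * η))
    (H' := fun η => (c : ℂ) * D (c * η))
    (fun η => by
      have := (hD (c * η)).scomp η ((hasDerivAt_id η).const_mul c)
      simpa using! this)
    (by fun_prop) (fun η => hb _) (M := (c ^ 3)⁻¹ * M)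
    (fun η => by
      have := hM (c * η)
      rw [abs_mul, abs_of_pos hc0, mul_pow, mul_assoc] at this
      rwa [← div_eq_inv_mul, le_div_iff₀' (by positivity)])
    (by
      simp only [hcc]
      exact (hDi.comp_mul_left' hc0.ne').const_mul _)
    (by
      simp only [hcc]
      rw [integral_const_mul, Measure.integral_comp_mul_left (fun ξ => ‖D ξ‖ ^ 2), hDint,
        abs_of_pos (by positivity), smul_eq_mul, ← mul_assoc]
      refine le_trans (le_of_eq ?_) hcL
      field_simp)
    (w := fun η => ((c ^ β : ℝ) : ℂ)⁻¹ * w (c * η)) hκ₁ hκ₂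
    (fun η hη => by
      have h0 : ((c ^ β : ℝ) : ℂ) ≠ 0 := Complex.ofReal_ne_zero.2 hcβ.ne'
      rw [hw₁ _ (by positivity), Real.mul_rpow hc0.le hη.le, Complex.ofReal_mul]
      field_simp)
    (fun η hη => by
      have h0 : ((c ^ β : ℝ) : ℂ) ≠ 0 := Complex.ofReal_ne_zero.2 hcβ.ne'
      rw [mul_neg, hw₂ _ (by positivity), Real.mul_rpow hc0.le hη.le, Complex.ofReal_mul]
      field_simp)
  have hscale : ∫ ξ : ℝ, cexp (I * (x * ξ + t * ξ ^ 3)) * w ξ * FT f ξ =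
      ((c * c ^ β : ℝ) : ℂ) * ∫ η : ℝ, cexp (I * ((x * c * η + η ^ 3 : ℝ) : ℂ)) *
        (((c ^ β : ℝ) : ℂ)⁻¹ * w (c * η)) * FT f (c * η) := by
    have h0 : ((c ^ β : ℝ) : ℂ) ≠ 0 := Complex.ofReal_ne_zero.2 hcβ.ne'
    have h1 : ∀ η : ℝ, cexp (I * ((x * c * η + η ^ 3 : ℝ) : ℂ)) *
        (((c ^ β : ℝ) : ℂ)⁻¹ * w (c * η)) * FT f (c * η) = ((c ^ β : ℝ) : ℂ)⁻¹ *
        (fun ξ : ℝ => cexp (I * (x * ξ + t * ξ ^ 3)) * w ξ * FT f ξ) (c * η) := by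
      intro η
      have h2 : ((x * c * η + η ^ 3 : ℝ) : ℂ) =
          x * ((c * η : ℝ) : ℂ) + t * ((c * η : ℝ) : ℂ) ^ 3 := by
        have : x * c * η + η ^ 3 = x * (c * η) + t * (c * η) ^ 3 := by
          linear_combination (-η ^ 3) * hc3
        rw [this]; push_cast; ring
      simp only [h2]; ring
    simp only [h1]
    rw [integral_const_mul, Measure.integral_comp_mul_left
      (fun ξ : ℝ => cexp (I * (x * ξ + t * ξ ^ 3)) * w ξ * FT f ξ), abs_of_pos (by positivity),
      Complex.real_smul]
    have h3 : (c : ℂ) ≠ 0 := Complex.ofReal_ne_zero.2 hc0.ne'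
    generalize (∫ ξ : ℝ, cexp (I * (x * ξ + t * ξ ^ 3)) * w ξ * FT f ξ) = J
    rw [Complex.ofReal_mul, Complex.ofReal_inv]
    field_simp
  have hcc' : c * c ^ β = t ^ (-(1:ℝ)/3 - β/3) := by
    nth_rw 1 [← Real.rpow_one c]
    rw [← Real.rpow_add hc0, hc, ← Real.rpow_mul ht0.le]; congr 1; ring
  have habs : |x * c| = |x| / t ^ ((1:ℝ)/3) := by
    rw [abs_mul, abs_of_pos hc0, hc, neg_div, Real.rpow_neg ht0.le]
    rfl
  have hr : ‖(Real.sqrt (2 * Real.pi) : ℂ)⁻¹‖ ≤ 1 := by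
    rw [norm_inv, Complex.norm_real, Real.norm_of_nonneg (Real.sqrt_nonneg _)]
    apply inv_le_one_of_one_le₀
    rw [Real.one_le_sqrt]; linarith [Real.pi_gt_three]
  rw [hscale, norm_mul, norm_mul, Complex.norm_real, Real.norm_of_nonneg (by positivity), hcc']
  rw [habs] at key
  have hT : 0 < t ^ (-(1:ℝ)/3 - β/3) := by positivity
  calc _ ≤ 1 * (t ^ (-(1:ℝ)/3 - β/3) * (2 * (801 * π + 3) *
        (1 + |x| / t ^ ((1:ℝ)/3)) ^ (-(1:ℝ)/4 + β/2))) := by gcongr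
    _ = _ := by ring

/-- Lemma 2.1 (pointwise dispersive estimates for the Airy evolution). -/
theorem airy_pointwise_dispersive :
    ∃ C : ℝ, 0 < C ∧
      ∀ t : ℝ, 1 ≤ t → ∀ f : SchwartzMap ℝ ℂ,
        LinfNorm (FT ⇑f) + t ^ (-(1:ℝ)/6) * L2norm (fun x => (x : ℂ) * f x) ≤ 1 →
        (∀ β ∈ Set.Icc (0:ℝ) 1, ∀ x : ℝ,
            ‖fracAiry (⇑f) t β x‖ ≤
              C * t ^ (-(1:ℝ)/3 - β/3) * (1 + |x| / t ^ ((1:ℝ)/3)) ^ (-(1:ℝ)/4 + β/2)) ∧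
        (∀ x : ℝ,
            ‖derivAiry (⇑f) t x‖ ≤
              C * t ^ (-(2:ℝ)/3) * (1 + |x| / t ^ ((1:ℝ)/3)) ^ ((1:ℝ)/4)) := by
  refine ⟨2 * (801 * π + 3), by positivity, fun t ht f hf => ⟨fun β hβ x => ?_, fun x => ?_⟩⟩
  · exact airy_bound ht hf hβ.1 hβ.2 x (w := fun ξ => ((|ξ| ^ β : ℝ) : ℂ)) (κ₁ := 1) (κ₂ := 1)
      (by simp) (by simp) (fun η hη => by rw [abs_of_pos hη, one_mul])
      (fun η hη => by rw [abs_neg, abs_of_pos hη, one_mul])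
  · have := airy_bound ht hf zero_le_one le_rfl x (w := fun ξ => I * ξ) (κ₁ := I) (κ₂ := -I)
      (by simp) (by simp) (fun η hη => by simp) (fun η hη => by simp)
    have e1 : -(1:ℝ)/3 - 1/3 = -(2:ℝ)/3 := by norm_num
    have e2 : -(1:ℝ)/4 + 1/2 = (1:ℝ)/4 := by norm_num
    rw [e1, e2] at this
    exact this
end
end

section
/- (Lemma 2.1, L^p dispersive estimate.) Let β ∈ [0,1/2) and p ∈ (1,∞) satisfy p(1/4 - β/2) > 1. There is a constant C = C(β,p) such that: if f = f(t,·) is Schwartz in x for each t ≥ 1 and satisfies sup_{t≥1}( ‖f̂(t,·)‖_{L^∞} + t^{-1/6}‖x f(t)‖_{L²} ) ≤ ε₁, then u(t,x) = (2π)^{-1/2}∫_ℝ e^{i(xξ+tξ³)} f̂(t,ξ) dξ satisfies ‖ |∂_x|^β u(t) ‖_{L^p(ℝ)} ≤ C ε₁ t^{-1/3-β/3+1/(3p)} for all t ≥ 1. -/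
/-!
Put `r = t^{-1/3}` and `G(η) = f̂(rη)`. Substituting `ξ = rη` gives
`(|∂ₓ|^β u)(t,x) = (2π)^{-1/2} r^{1+β} ∫ e^{i(yη+η³)} |η|^β G(η) dη` with `y = rx`, and by Plancherel
the hypothesis becomes the scale-free pair `‖G‖_∞ ≤ ε`, `‖G'‖_{L²} ≤ ε` (`exists_isProfile`).
It therefore suffices to bound this integral by `C ε (1+|y|)^{-(1/4-β/2)}` (`line_bound`): the
`p`-th power of the weight is integrable because `p(1/4-β/2) > 1`, and rescaling the `L^p` norm
produces the factor `t^{1/(3p)}`.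

By reflection and conjugation it is enough to integrate over `η > 0` (`half_line_bound`). The phase
`φ(η) = yη + η³` has `φ' = 3η² + y`. Where `h = η^β/φ'` is monotone, one integration by parts bounds
the integral by `ε (sup |h| + ‖h‖_{L²})` up to a constant (`norm_integral_le_of_monotone`): `h'` is
paired with `‖G‖_∞` and `h` with `‖G'‖_{L²}`. Three ranges of `y` remain.

* `|y| ≤ 3`: the trivial bound on `[0,2]`, integration by parts beyond (`half_bound_small`).
* `y ≥ 3`: there is no stationary point, and `h` increases up to `√(βy/(6-3β))` and decreases after
  it (`half_bound_pos`).
* `y = -3a²` with `a ≥ 1`: the trivial bound on `|η-a| ≤ a^{-1/2}` gives `a^{β-1/2}`, and integration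
  by parts at distance at least `a^{-1/2}` from `a` gives the same size (`half_bound_neg`).
-/

noncomputable section

open MeasureTheory Real Complex

/-- L^p norm for a real exponent p. -/
def LpNorm (p : ℝ) (g : ℝ → ℂ) : ℝ := (∫ x : ℝ, ‖g x‖ ^ p) ^ (1/p)

/-- The free Airy evolution `u(t,x) = (e^{-t∂ₓ³} f)(x) = (2π)^{-1/2} ∫ e^{i(xξ+tξ³)} f̂(ξ) dξ`. -/
def uAiry (g : ℝ → ℂ) (t x : ℝ) : ℂ :=
  (Real.sqrt (2 * Real.pi) : ℂ)⁻¹ *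
    ∫ ξ : ℝ, Complex.exp (Complex.I * (x * ξ + t * ξ ^ 3)) * FT g ξ

/-! ### The Fourier transform -/

open scoped FourierTransform SchwartzMap LineDeriv in
theorem FT_eq_fourier (f : SchwartzMap ℝ ℂ) (ξ : ℝ) :
    FT f ξ = (Real.sqrt (2 * Real.pi) : ℂ)⁻¹ * (𝓕 f) ((2 * Real.pi)⁻¹ * ξ) := by
  rw [SchwartzMap.fourier_coe, Real.fourier_real_eq_integral_exp_smul, FT]
  congr 1
  refine integral_congr_ae (Filter.Eventually.of_forall fun x => ?_)
  simp only [smul_eq_mul]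
  congr 2
  have : (Real.pi : ℂ) ≠ 0 := by exact_mod_cast Real.pi_ne_zero
  push_cast
  field_simp

open scoped FourierTransform SchwartzMap LineDeriv in
/-- Plancherel applied to `∂_ξ 𝓕f = 𝓕(-2πi x f)`, in Mathlib's normalization of the transform. -/
theorem integral_norm_deriv_fourier_sq (f : SchwartzMap ℝ ℂ) :
    ∫ ξ : ℝ, ‖deriv (⇑(𝓕 f : SchwartzMap ℝ ℂ)) ξ‖ ^ 2 =
      (2 * Real.pi) ^ 2 * ∫ x : ℝ, ‖(x : ℂ) * f x‖ ^ 2 := by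
  have h := SchwartzMap.lineDerivOp_fourier_eq f (1 : ℝ)
  have h2 : ∀ ξ, deriv (⇑(𝓕 f : SchwartzMap ℝ ℂ)) ξ =
      𝓕 (-(2 * π * Complex.I) • SchwartzMap.smulLeftCLM ℂ (inner ℝ · (1:ℝ)) f) ξ := by
    intro ξ
    rw [← h, SchwartzMap.lineDerivOp_apply_eq_fderiv]
    simp
  simp_rw [h2]
  rw [SchwartzMap.integral_norm_sq_fourier, ← integral_const_mul]
  congr 1
  ext x
  have : (fun y : ℝ => inner ℝ y (1:ℝ)).HasTemperateGrowth := by fun_prop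
  rw [smul_apply, SchwartzMap.smulLeftCLM_apply_apply this]
  simp [abs_of_pos Real.pi_pos]
  ring

/-! ### The rescaled frequency profile -/

/-- The hypotheses on a frequency profile `G` with derivative `G'` that the oscillatory estimates
use: `‖G‖_∞ ≤ ε`, `‖G'‖_{L²} ≤ ε`, and integrability of `|η|^β G`. -/
structure IsProfile (β ε : ℝ) (G G' : ℝ → ℂ) : Prop where
  hasDerivAt : ∀ η, HasDerivAt G (G' η) η
  cont_deriv : Continuous G'
  bound : ∀ η, ‖G η‖ ≤ ε
  sq_integrable : Integrable fun η => ‖G' η‖ ^ 2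
  sq_le : ∫ η, ‖G' η‖ ^ 2 ≤ ε ^ 2
  integrable : Integrable fun η => ((|η| ^ β : ℝ) : ℂ) * G η

open scoped FourierTransform SchwartzMap in
/-- With `r = t^{-1/3}`, the rescaled profile `η ↦ f̂(rη)` satisfies scale-free bounds: Plancherel
turns `‖x f‖_{L²}` into `‖∂_ξ f̂‖_{L²}`, and the rescaling multiplies its square by `r`. -/
theorem exists_isProfile {β ε r : ℝ} (hβ0 : 0 ≤ β) (hβ1 : β ≤ 1) (hr : 0 < r)
    (f : SchwartzMap ℝ ℂ)
    (hf : LinfNorm (FT f) + Real.sqrt r * L2norm (fun x => (x : ℂ) * f x) ≤ ε) :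
    ∃ G', IsProfile β ε (fun η => FT f (r * η)) G' := by
  have hpi := Real.pi_pos
  set H : SchwartzMap ℝ ℂ := 𝓕 f with hH
  set c : ℂ := (Real.sqrt (2 * Real.pi) : ℂ)⁻¹ with hc
  have hcn : ‖c‖ ^ 2 = (2 * Real.pi)⁻¹ := by
    rw [hc, norm_inv, Complex.norm_real, inv_pow, Real.norm_eq_abs, sq_abs,
      Real.sq_sqrt (by positivity)]
  set s : ℝ := (2 * Real.pi)⁻¹ * r with hs
  have hs0 : 0 < s := by positivity
  have hG : ∀ η, FT f (r * η) = c * H (s * η) := by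
    intro η
    rw [FT_eq_fourier, hs, mul_assoc]
  have hL2 : 0 ≤ L2norm (fun x => (x : ℂ) * f x) := Real.sqrt_nonneg _
  have hbdd : BddAbove (Set.range fun ξ => ‖FT f ξ‖) := by
    obtain ⟨C, -, hC⟩ := H.decay 0 0
    refine ⟨‖c‖ * C, ?_⟩
    rintro _ ⟨ξ, rfl⟩
    simp only [FT_eq_fourier, norm_mul]
    have := hC ((2 * Real.pi)⁻¹ * ξ)
    simp only [pow_zero, one_mul, norm_iteratedFDeriv_zero] at this
    gcongr
  have hLinf : ∀ ξ, ‖FT f ξ‖ ≤ LinfNorm (FT f) := fun ξ => le_ciSup hbdd ξ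
  have hLinf0 : 0 ≤ LinfNorm (FT f) := (norm_nonneg _).trans (hLinf 0)
  have hdH : Continuous (deriv H) := (SchwartzMap.derivCLM ℝ ℂ H).continuous
  have hmem : Integrable (fun ξ => ‖deriv H ξ‖ ^ 2) := by
    have := (SchwartzMap.derivCLM ℝ ℂ H).memLp 2
    exact (this.integrable_norm_pow (by norm_num) : _)
  refine ⟨fun η => c * (s * deriv H (s * η)), ?_, ?_, ?_, ?_, ?_, ?_⟩
  · intro η
    simp only [hG]
    have h1 : HasDerivAt H (deriv H (s * η)) (s * η) :=
      (H.differentiable _).hasDerivAt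
    have h2 : HasDerivAt (fun η : ℝ => s * η) s η := by
      simpa using (hasDerivAt_id η).const_mul s
    have := (h1.scomp η h2).const_mul c
    simpa using! this
  · fun_prop
  · intro η
    have : 0 ≤ Real.sqrt r * L2norm (fun x => (x : ℂ) * f x) := by positivity
    linarith [hLinf (r * η)]
  · have := (hmem.comp_mul_left' hs0.ne').const_mul (‖c‖ ^ 2 * s ^ 2)
    refine this.congr (Filter.Eventually.of_forall fun η => ?_)
    simp [mul_pow]
    ring
  · have h1 : ∀ η, ‖c * (s * deriv H (s * η))‖ ^ 2 =
        (‖c‖ ^ 2 * s ^ 2) * ‖deriv H (s * η)‖ ^ 2 := by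
      intro η
      simp [mul_pow]
      ring
    simp_rw [h1]
    rw [integral_const_mul, Measure.integral_comp_mul_left (fun ξ => ‖deriv H ξ‖ ^ 2) s,
      integral_norm_deriv_fourier_sq, abs_of_pos (by positivity), hcn]
    have h2 : (Real.sqrt r * L2norm (fun x => (x : ℂ) * f x)) ^ 2 ≤ ε ^ 2 := by
      apply pow_le_pow_left₀ (by positivity)
      linarith
    rw [mul_pow, Real.sq_sqrt hr.le, L2norm, Real.sq_sqrt (integral_nonneg fun x => by positivity)]
      at h2
    refine le_trans (le_of_eq ?_) h2
    rw [hs, smul_eq_mul]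
    field_simp
  · have h1 : Integrable fun η : ℝ => ((|η| ^ β : ℝ) : ℂ) * H η := by
      have h0 := (H.integrable (μ := volume)).norm.add (by simpa using H.integrable_pow_mul volume 1)
      refine h0.mono' ?_ (Filter.Eventually.of_forall fun η => ?_)
      · apply Continuous.aestronglyMeasurable
        have := H.continuous
        have : Continuous fun η : ℝ => |η| ^ β := continuous_abs.rpow_const fun _ => Or.inr hβ0
        fun_prop
      · have : |η| ^ β ≤ 1 + |η| := by
          rcases le_total |η| 1 with h | h
          · linarith [Real.rpow_le_one (abs_nonneg η) h hβ0, abs_nonneg η]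
          · have := Real.rpow_le_rpow_of_exponent_le h hβ1
            rw [Real.rpow_one] at this
            linarith
        rw [norm_mul, Complex.norm_real, Real.norm_of_nonneg (by positivity)]
        simp only [Pi.add_apply]
        nlinarith [norm_nonneg (H η)]
    have h2 := (h1.comp_mul_left' hs0.ne').const_mul (c * ((s ^ β : ℝ) : ℂ)⁻¹)
    refine h2.congr (Filter.Eventually.of_forall fun η => ?_)
    have h3 : ((s ^ β : ℝ) : ℂ) ≠ 0 := by
      exact_mod_cast (Real.rpow_pos_of_pos hs0 β).ne'
    simp only [hG]
    rw [abs_mul, abs_of_pos hs0, Real.mul_rpow hs0.le (abs_nonneg _)]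
    push_cast
    field_simp

/-! ### Non-stationary phase -/

/-- Non-stationary phase on `[b, c] ⊆ [0, ∞)`: with `φ(η) = yη + η³`, one integration by parts
against `h = η^β / φ'` costs boundary terms (`2Sε`), the total variation of the monotone function
`h` (`2Sε`) and, by AM-GM, the product of the `L²` norms of `h` and `G'` (`Sε`). -/
theorem norm_integral_le_of_monotone {β ε S y b c σ : ℝ} {G G' : ℝ → ℂ} (hG : IsProfile β ε G G')
    (hβ0 : 0 ≤ β) (hε : 0 < ε) (hS : 0 < S) (hb : 0 ≤ b) (hbc : b ≤ c)
    (hne : ∀ η ∈ Set.Icc b c, 3 * η ^ 2 + y ≠ 0) (hσ : |σ| = 1)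
    (hmono : ∀ η ∈ Set.Ioo b c, 0 ≤ σ * (β * y - (6 - 3 * β) * η ^ 2))
    (hsup : ∀ η ∈ Set.Icc b c, |η ^ β / (3 * η ^ 2 + y)| ≤ S)
    (hL2 : ∫ η in b..c, (η ^ β / (3 * η ^ 2 + y)) ^ 2 ≤ S ^ 2) :
    ‖∫ η in b..c, Complex.exp (Complex.I * (y * η + η ^ 3)) * ((η ^ β : ℝ) : ℂ) * G η‖
      ≤ 5 * S * ε := by
  set h : ℝ → ℝ := fun η => η ^ β / (3 * η ^ 2 + y) with hh
  set h' : ℝ → ℝ := fun η => η ^ (β - 1) * (β * y - (6 - 3 * β) * η ^ 2) / (3 * η ^ 2 + y) ^ 2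
    with hh'
  set v : ℝ → ℂ := fun η => Complex.exp (Complex.I * (y * η + η ^ 3)) with hv
  set v' : ℝ → ℂ := fun η => Complex.I * ((3 * η ^ 2 + y : ℝ) : ℂ) * v η with hv'
  have hσ2 : σ * σ = 1 := by rw [← abs_mul_abs_self, hσ, one_mul]
  have hGc : Continuous G := continuous_iff_continuousAt.2 fun η => (hG.hasDerivAt η).continuousAt
  have hG'c := hG.cont_deriv
  have hnv : ∀ η, ‖v η‖ = 1 := by
    intro η
    have : Complex.I * (y * η + η ^ 3) = ((y * η + η ^ 3 : ℝ) : ℂ) * Complex.I := by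
      push_cast; ring
    simp only [hv]
    rw [this, Complex.norm_exp_ofReal_mul_I]
  have hvc : Continuous v := by simp only [hv]; fun_prop
  have hv'c : Continuous v' := by simp only [hv']; fun_prop
  have hvd : ∀ η, HasDerivAt v (v' η) η := by
    intro η
    have h1 : HasDerivAt (fun η : ℝ => Complex.I * (((y * η + η ^ 3 : ℝ)) : ℂ))
        (Complex.I * ((y * 1 + 3 * η ^ 2 : ℝ) : ℂ)) η := by
      apply HasDerivAt.const_mul
      apply HasDerivAt.ofReal_comp
      simpa using! ((hasDerivAt_id η).const_mul y).add (hasDerivAt_pow 3 η)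
    have h2 := h1.cexp
    simp only [hv, hv']
    convert! h2 using 1
    · ext η; push_cast; rfl
    · push_cast; ring
  have hhc : ContinuousOn h (Set.Icc b c) := by
    apply ContinuousOn.div _ (by fun_prop) hne
    exact (continuous_id.rpow_const fun _ => Or.inr hβ0).continuousOn
  have hhd : ∀ η ∈ Set.Ioo b c, HasDerivAt h (h' η) η := by
    intro η hη
    have hη0 : 0 < η := hb.trans_lt hη.1
    have hn := hne η ⟨hη.1.le, hη.2.le⟩
    have h1 : HasDerivAt (fun η : ℝ => η ^ β) (β * η ^ (β - 1)) η :=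
      Real.hasDerivAt_rpow_const (Or.inl hη0.ne')
    have h2 : HasDerivAt (fun η : ℝ => 3 * η ^ 2 + y) (3 * (2 * η)) η := by
      simpa using ((hasDerivAt_pow 2 η).const_mul 3).add_const y
    convert! h1.div h2 hn using 1
    simp only [hh']
    have : η ^ β = η ^ (β - 1) * η := by
      rw [Real.rpow_sub_one hη0.ne']; field_simp
    rw [this]
    congr 1
    ring
  have hh'pos : ∀ η ∈ Set.Ioo b c, 0 ≤ σ * h' η := by
    intro η hη
    have hη0 : 0 < η := hb.trans_lt hη.1
    have : σ * h' η = η ^ (β - 1) * (σ * (β * y - (6 - 3 * β) * η ^ 2)) / (3 * η ^ 2 + y) ^ 2 := by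
      simp only [hh']; ring
    rw [this]
    have := hmono η hη
    positivity
  have hu : Set.uIcc b c = Set.Icc b c := Set.uIcc_of_le hbc
  have hmm : Set.Ioo (min b c) (max b c) = Set.Ioo b c := by
    rw [min_eq_left hbc, max_eq_right hbc]
  have hσi : IntervalIntegrable (fun η => σ * h' η) volume b c := by
    refine intervalIntegral.intervalIntegrable_deriv_of_nonneg (g := fun η => σ * h η) ?_ ?_ ?_
    · rw [hu]; exact hhc.const_smul σ
    · rw [hmm]; intro η hη; exact (hhd η hη).const_mul σ
    · rw [hmm]; exact hh'pos
  have hh'i : IntervalIntegrable h' volume b c := by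
    have := hσi.const_mul σ
    simpa [← mul_assoc, hσ2] using this
  have hσint : ∫ η in b..c, σ * h' η = σ * h c - σ * h b :=
    intervalIntegral.integral_eq_sub_of_hasDerivAt_of_le hbc (hhc.const_smul σ)
      (fun η hη => (hhd η hη).const_mul σ) hσi
  have hhcC : ContinuousOn (fun η => (h η : ℂ)) (Set.uIcc b c) := by
    rw [hu]; exact Complex.continuous_ofReal.comp_continuousOn hhc
  set u' : ℝ → ℂ := fun η => (h' η : ℂ) * G η + (h η : ℂ) * G' η with hu'
  have hu'i : IntervalIntegrable u' volume b c := by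
    apply IntervalIntegrable.add
    · have : IntervalIntegrable (fun η => (h' η : ℂ)) volume b c :=
        ⟨hh'i.1.ofReal, hh'i.2.ofReal⟩
      exact this.mul_continuousOn hGc.continuousOn
    · exact (hhcC.mul hG'c.continuousOn).intervalIntegrable
  have ibp := intervalIntegral.integral_mul_deriv_eq_deriv_mul_of_hasDerivAt
    (u := fun η => (h η : ℂ) * G η) (v := v) (u' := u') (v' := v') (a := b) (b := c)
    (hhcC.mul hGc.continuousOn) hvc.continuousOn
    (by
      rw [hmm]; intro η hη
      exact ((hhd η hη).ofReal_comp).mul (hG.hasDerivAt η))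
    (fun η _ => hvd η) hu'i (hv'c.intervalIntegrable _ _)
  have hlhs : ∫ η in b..c, (h η : ℂ) * G η * v' η =
      Complex.I * ∫ η in b..c, v η * ((η ^ β : ℝ) : ℂ) * G η := by
    rw [← intervalIntegral.integral_const_mul]
    apply intervalIntegral.integral_congr
    intro η hη
    rw [hu] at hη
    have hn := hne η hη
    have : ((η ^ β : ℝ) : ℂ) = (h η : ℂ) * ((3 * η ^ 2 + y : ℝ) : ℂ) := by
      rw [← Complex.ofReal_mul]
      congr 1
      simp only [hh]
      field_simp
    simp only [hv']
    rw [this]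
    ring
  have hnorm : ‖∫ η in b..c, v η * ((η ^ β : ℝ) : ℂ) * G η‖ =
      ‖∫ η in b..c, (h η : ℂ) * G η * v' η‖ := by
    rw [hlhs, norm_mul, Complex.norm_I, one_mul]
  rw [hnorm, ibp]
  have hbnd : ∀ η ∈ Set.Icc b c, ‖(h η : ℂ) * G η * v η‖ ≤ S * ε := by
    intro η hη
    rw [norm_mul, norm_mul, hnv, mul_one, Complex.norm_real, Real.norm_eq_abs]
    exact mul_le_mul (hsup η hη) (hG.bound η) (norm_nonneg _) hS.le
  have hsqi : IntervalIntegrable (fun η => h η ^ 2) volume b c := by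
    apply ContinuousOn.intervalIntegrable
    rw [hu]; exact hhc.pow 2
  have hGi : IntervalIntegrable (fun η => ‖G' η‖ ^ 2) volume b c :=
    hG.sq_integrable.intervalIntegrable
  have hGle : ∫ η in b..c, ‖G' η‖ ^ 2 ≤ ε ^ 2 := by
    rw [intervalIntegral.integral_of_le hbc]
    exact (setIntegral_le_integral hG.sq_integrable
      (Filter.Eventually.of_forall fun η => by positivity)).trans hG.sq_le
  -- AM-GM with weight `ε / S` replaces the Cauchy-Schwarz inequality for `∫ |h| |G'|`.
  have hmain : ‖∫ η in b..c, u' η * v η‖ ≤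
      ∫ η in b..c, ((σ * h' η) * ε + (ε / S / 2 * h η ^ 2 + S / ε / 2 * ‖G' η‖ ^ 2)) := by
    apply intervalIntegral.norm_integral_le_of_norm_le hbc
    · filter_upwards [(Set.countable_singleton c).ae_notMem volume] with η hηc hη
      have hη' : η ∈ Set.Ioo b c := ⟨hη.1, lt_of_le_of_ne hη.2 hηc⟩
      have habs : |h' η| = σ * h' η := by
        rw [← abs_of_nonneg (hh'pos η hη'), abs_mul, hσ, one_mul]
      have hAG : |h η| * ‖G' η‖ ≤ ε / S / 2 * h η ^ 2 + S / ε / 2 * ‖G' η‖ ^ 2 := by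
        have : ε / S / 2 * h η ^ 2 + S / ε / 2 * ‖G' η‖ ^ 2 - |h η| * ‖G' η‖ =
            (ε * |h η| - S * ‖G' η‖) ^ 2 / (2 * S * ε) := by
          rw [← sq_abs (h η)]
          field_simp
          ring
        have h0 : 0 ≤ (ε * |h η| - S * ‖G' η‖) ^ 2 / (2 * S * ε) := by positivity
        linarith
      rw [norm_mul, hnv, mul_one]
      refine (norm_add_le _ _).trans (add_le_add ?_ ?_)
      · rw [norm_mul, Complex.norm_real, Real.norm_eq_abs, habs]
        exact mul_le_mul_of_nonneg_left (hG.bound η) (hh'pos η hη')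
      · rw [norm_mul, Complex.norm_real, Real.norm_eq_abs]
        exact hAG
    · exact (hσi.mul_const ε).add ((hsqi.const_mul _).add (hGi.const_mul _))
  rw [intervalIntegral.integral_add (hσi.mul_const ε) ((hsqi.const_mul _).add (hGi.const_mul _)),
    intervalIntegral.integral_add (hsqi.const_mul _) (hGi.const_mul _),
    intervalIntegral.integral_mul_const, hσint, intervalIntegral.integral_const_mul,
    intervalIntegral.integral_const_mul] at hmain
  have e1 : (σ * h c - σ * h b) * ε ≤ 2 * S * ε := by
    apply mul_le_mul_of_nonneg_right _ hε.le
    have h1 := hsup c ⟨hbc, le_rfl⟩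
    have h2 := hsup b ⟨le_rfl, hbc⟩
    have h3 : |σ * h c - σ * h b| ≤ S + S := by
      refine (abs_sub _ _).trans ?_
      rw [abs_mul, abs_mul, hσ, one_mul, one_mul]
      exact add_le_add h1 h2
    linarith [le_abs_self (σ * h c - σ * h b)]
  have e2 : ε / S / 2 * ∫ η in b..c, h η ^ 2 ≤ ε / S / 2 * S ^ 2 :=
    mul_le_mul_of_nonneg_left hL2 (by positivity)
  have e3 : S / ε / 2 * ∫ η in b..c, ‖G' η‖ ^ 2 ≤ S / ε / 2 * ε ^ 2 :=
    mul_le_mul_of_nonneg_left hGle (by positivity)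
  have e4 : ε / S / 2 * S ^ 2 + S / ε / 2 * ε ^ 2 = S * ε := by
    field_simp; ring
  have e5 := hbnd c ⟨hbc, le_rfl⟩
  have e6 := hbnd b ⟨le_rfl, hbc⟩
  have e7 := norm_sub_le ((h c : ℂ) * G c * v c - (h b : ℂ) * G b * v b) (∫ η in b..c, u' η * v η)
  have e8 := norm_sub_le ((h c : ℂ) * G c * v c) ((h b : ℂ) * G b * v b)
  linarith

theorem norm_integral_le_trivial {β ε y b c : ℝ} {G G' : ℝ → ℂ} (hG : IsProfile β ε G G')
    (hβ0 : 0 ≤ β) (hb : 0 ≤ b) (hbc : b ≤ c) :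
    ‖∫ η in b..c, Complex.exp (Complex.I * (y * η + η ^ 3)) * ((η ^ β : ℝ) : ℂ) * G η‖
      ≤ c ^ β * ε * (c - b) := by
  rw [← abs_of_nonneg (sub_nonneg.2 hbc)]
  apply intervalIntegral.norm_integral_le_of_norm_le_const
  intro η hη
  rw [Set.uIoc_of_le hbc] at hη
  have hη0 : 0 ≤ η := hb.trans hη.1.le
  have : Complex.I * (y * η + η ^ 3) = ((y * η + η ^ 3 : ℝ) : ℂ) * Complex.I := by
    push_cast; ring
  rw [norm_mul, norm_mul, this, Complex.norm_exp_ofReal_mul_I, one_mul, Complex.norm_real,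
    Real.norm_of_nonneg (by positivity)]
  exact mul_le_mul (Real.rpow_le_rpow hη0 hη.2 hβ0) (hG.bound η) (norm_nonneg _)
    (Real.rpow_nonneg (hη0.trans hη.2) _)

theorem osc_intervalIntegrable {β ε : ℝ} (y b c : ℝ) {G G' : ℝ → ℂ} (hG : IsProfile β ε G G')
    (hβ0 : 0 ≤ β) :
    IntervalIntegrable (fun η : ℝ => Complex.exp (Complex.I * (y * η + η ^ 3)) *
      ((η ^ β : ℝ) : ℂ) * G η) volume b c := by
  apply Continuous.intervalIntegrable
  have hGc : Continuous G := continuous_iff_continuousAt.2 fun η => (hG.hasDerivAt η).continuousAt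
  have : Continuous fun η : ℝ => η ^ β := continuous_id.rpow_const fun _ => Or.inr hβ0
  fun_prop

/-- A pointwise Lorentzian majorant of `h` gives both bounds needed for non-stationary phase,
because `∫ (1 + η²)⁻¹ = π ≤ 4`. -/
theorem norm_integral_le_of_majorant {β ε S y b c σ : ℝ} {G G' : ℝ → ℂ} (hG : IsProfile β ε G G')
    (hβ0 : 0 ≤ β) (hε : 0 < ε) (hS : 0 < S) (hb : 0 ≤ b) (hbc : b ≤ c)
    (hne : ∀ η ∈ Set.Icc b c, 3 * η ^ 2 + y ≠ 0) (hσ : |σ| = 1)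
    (hmono : ∀ η ∈ Set.Ioo b c, 0 ≤ σ * (β * y - (6 - 3 * β) * η ^ 2))
    (hmaj : ∀ η ∈ Set.Icc b c, (η ^ β / (3 * η ^ 2 + y)) ^ 2 ≤ S ^ 2 * (1 + η ^ 2)⁻¹) :
    ‖∫ η in b..c, Complex.exp (Complex.I * (y * η + η ^ 3)) * ((η ^ β : ℝ) : ℂ) * G η‖
      ≤ 10 * S * ε := by
  have key := norm_integral_le_of_monotone (S := 2 * S) hG hβ0 hε (by positivity) hb hbc hne hσ hmono
    ?_ ?_
  · linarith
  · intro η hη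
    apply abs_le_of_sq_le_sq _ (by positivity)
    refine (hmaj η hη).trans ?_
    have : (1 + η ^ 2)⁻¹ ≤ 1 := inv_le_one_of_one_le₀ (by nlinarith)
    nlinarith [sq_nonneg S]
  · have hc1 : ContinuousOn (fun η : ℝ => (η ^ β / (3 * η ^ 2 + y)) ^ 2) (Set.uIcc b c) := by
      rw [Set.uIcc_of_le hbc]
      apply ContinuousOn.pow
      apply ContinuousOn.div _ (by fun_prop) hne
      exact (continuous_id.rpow_const fun _ => Or.inr hβ0).continuousOn
    have hi : Integrable (fun η : ℝ => S ^ 2 * (1 + η ^ 2)⁻¹) :=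
      integrable_inv_one_add_sq.const_mul _
    refine (intervalIntegral.integral_mono_on hbc hc1.intervalIntegrable
      hi.intervalIntegrable hmaj).trans ?_
    rw [intervalIntegral.integral_of_le hbc]
    refine (setIntegral_le_integral hi (Filter.Eventually.of_forall fun η => by positivity)).trans ?_
    rw [integral_const_mul, integral_univ_inv_one_add_sq]
    nlinarith [Real.pi_le_four, sq_nonneg S]

/-! ### The three ranges of `y` on the half-line -/

/-- Bounded `y`: the stationary point, if any, lies in `[0, 2]`. -/
theorem half_bound_small {β ε y c : ℝ} {G G' : ℝ → ℂ} (hG : IsProfile β ε G G')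
    (hβ0 : 0 ≤ β) (hβ1 : β < 1 / 2) (hε : 0 < ε) (hy : |y| ≤ 3) (hc : 2 ≤ c) :
    ‖∫ η in (0:ℝ)..c, Complex.exp (Complex.I * (y * η + η ^ 3)) * ((η ^ β : ℝ) : ℂ) * G η‖
      ≤ 14 * ε := by
  rw [abs_le] at hy
  rw [← intervalIntegral.integral_add_adjacent_intervals (osc_intervalIntegrable y 0 2 hG hβ0)
    (osc_intervalIntegrable y 2 c hG hβ0)]
  refine (norm_add_le _ _).trans ?_
  have h1 := norm_integral_le_trivial (y := y) hG hβ0 le_rfl (zero_le_two (α := ℝ))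
  have h2 : (2:ℝ) ^ β ≤ 2 := by
    have := Real.rpow_le_rpow_of_exponent_le (x := 2) (by norm_num) (by linarith : β ≤ 1)
    rwa [Real.rpow_one] at this
  have h3 := norm_integral_le_of_majorant (S := 1) (y := y) (b := 2) (c := c) (σ := -1) hG hβ0 hε
    one_pos zero_le_two hc (fun η hη => by nlinarith [hη.1]) (by simp)
    (fun η hη => by nlinarith [hη.1, mul_nonneg hβ0 (sq_nonneg η)]) ?_
  · nlinarith
  · intro η hη
    have hη2 := hη.1
    have h4 : η ^ β ≤ η := by
      have := Real.rpow_le_rpow_of_exponent_le (x := η) (by linarith) (by linarith : β ≤ 1)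
      rwa [Real.rpow_one] at this
    have h5 : 2 * η ^ 2 ≤ 3 * η ^ 2 + y := by nlinarith
    have h6 : η ^ β / (3 * η ^ 2 + y) ≤ η / (2 * η ^ 2) := by gcongr
    have h7 : 0 ≤ η ^ β / (3 * η ^ 2 + y) := by
      apply div_nonneg (Real.rpow_nonneg (by linarith) _)
      nlinarith
    refine (pow_le_pow_left₀ h7 h6 2).trans ?_
    rw [one_pow, one_mul, div_pow, div_le_iff₀ (by positivity), inv_mul_eq_div, le_div_iff₀ (by positivity)]
    nlinarith [sq_nonneg η, sq_nonneg (η ^ 2), mul_nonneg (sq_nonneg η) (by nlinarith : 0 ≤ η ^ 2 - 1)]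

/-- Positive `y`: no stationary point, so only non-stationary phase is used. -/
theorem half_bound_pos {β ε y : ℝ} {G G' : ℝ → ℂ} (hG : IsProfile β ε G G')
    (hβ0 : 0 ≤ β) (hβ1 : β < 1 / 2) (hε : 0 < ε) (hy : 1 ≤ y) :
    ∃ c₀ : ℝ, ∀ c ≥ c₀,
    ‖∫ η in (0:ℝ)..c, Complex.exp (Complex.I * (y * η + η ^ 3)) * ((η ^ β : ℝ) : ℂ) * G η‖
      ≤ 20 * y ^ (-(1/4 - β/2)) * ε := by
  have hy0 : 0 < y := by linarith
  -- `s` is the point where `h` switches from increasing to decreasing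
  set s : ℝ := Real.sqrt (β * y / (6 - 3 * β)) with hs
  have h6 : 0 < 6 - 3 * β := by linarith
  have hs0 : 0 ≤ s := Real.sqrt_nonneg _
  have hs2 : (6 - 3 * β) * s ^ 2 = β * y := by
    rw [hs, Real.sq_sqrt (by positivity)]
    field_simp
  set S : ℝ := y ^ (-(1/4 - β/2)) with hS
  have hS0 : 0 < S := Real.rpow_pos_of_pos hy0 _
  have hne : ∀ η : ℝ, 3 * η ^ 2 + y ≠ 0 := fun η => by positivity
  have hmaj : ∀ η : ℝ, 0 ≤ η → (η ^ β / (3 * η ^ 2 + y)) ^ 2 ≤ S ^ 2 * (1 + η ^ 2)⁻¹ := by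
    intro η hη
    set Q : ℝ := η ^ 2 + y with hQ
    have hQ0 : 0 < Q := by positivity
    have hQ1 : 1 + η ^ 2 ≤ Q := by linarith
    have hQy : y ≤ Q := by nlinarith
    have h1 : η ^ β ≤ Q ^ (β / 2) := by
      have : η ^ β = (η ^ 2) ^ (β / 2) := by
        rw [← Real.rpow_natCast, ← Real.rpow_mul hη]
        congr 1; push_cast; ring
      rw [this]
      exact Real.rpow_le_rpow (by positivity) (by linarith) (by linarith)
    have h2 : η ^ β / (3 * η ^ 2 + y) ≤ Q ^ (β / 2) / Q := by
      have : Q ≤ 3 * η ^ 2 + y := by nlinarith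
      gcongr
    have h3 : Q ^ (β / 2) / Q = Q ^ (-(1/4 - β/2)) * Q ^ (-(3/4:ℝ)) := by
      rw [← Real.rpow_sub_one hQ0.ne', ← Real.rpow_add hQ0]
      congr 1; ring
    have h4 : Q ^ (-(1/4 - β/2)) ≤ S :=
      Real.rpow_le_rpow_of_nonpos hy0 hQy (by linarith)
    have h5 : (Q ^ (-(3/4:ℝ))) ^ 2 ≤ (1 + η ^ 2)⁻¹ := by
      rw [← Real.rpow_natCast, ← Real.rpow_mul hQ0.le, ← Real.rpow_neg_one]
      refine (Real.rpow_le_rpow_of_exponent_le (y := -(3/4) * ((2:ℕ):ℝ)) (z := -1) (by nlinarith)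
        (by norm_num)).trans ?_
      exact Real.rpow_le_rpow_of_nonpos (by positivity) hQ1 (by norm_num)
    have h7 : 0 ≤ η ^ β / (3 * η ^ 2 + y) := by positivity
    calc _ ≤ (Q ^ (-(1/4 - β/2)) * Q ^ (-(3/4:ℝ))) ^ 2 := pow_le_pow_left₀ h7 (h2.trans h3.le) 2
      _ = (Q ^ (-(1/4 - β/2))) ^ 2 * (Q ^ (-(3/4:ℝ))) ^ 2 := mul_pow _ _ _
      _ ≤ _ := by gcongr
  refine ⟨s, fun c hc => ?_⟩
  rw [← intervalIntegral.integral_add_adjacent_intervals (osc_intervalIntegrable y 0 s hG hβ0)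
    (osc_intervalIntegrable y s c hG hβ0)]
  refine (norm_add_le _ _).trans ?_
  have h1 := norm_integral_le_of_majorant (S := S) (y := y) (b := 0) (c := s) (σ := 1) hG hβ0 hε
    hS0 le_rfl hs0 (fun η _ => hne η) (by simp) ?_ (fun η hη => hmaj η hη.1)
  have h2 := norm_integral_le_of_majorant (S := S) (y := y) (b := s) (c := c) (σ := -1) hG hβ0 hε
    hS0 hs0 hc (fun η _ => hne η) (by simp) ?_ (fun η hη => hmaj η (hs0.trans hη.1))
  · linarith
  · intro η hη
    have : s ^ 2 ≤ η ^ 2 := pow_le_pow_left₀ hs0 hη.1.le 2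
    nlinarith
  · intro η hη
    have : η ^ 2 ≤ s ^ 2 := pow_le_pow_left₀ hη.1.le hη.2.le 2
    nlinarith

/-- Non-stationary phase at distance at least `ρ` from the stationary point `a`, where
`ρ = a^{-1/2}` is encoded by `a * ρ ^ 2 = 1`. -/
theorem norm_integral_le_away {β ε a ρ b c : ℝ} {G G' : ℝ → ℂ} (hG : IsProfile β ε G G')
    (hβ0 : 0 ≤ β) (hβ1 : β < 1 / 2) (hε : 0 < ε) (ha : 1 ≤ a) (hρ : 0 < ρ) (haρ : a * ρ ^ 2 = 1)
    (hb : 0 ≤ b) (hbc : b ≤ c) (hdist : ∀ η ∈ Set.Icc b c, ρ ≤ |η - a|)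
    (hint : (b - a)⁻¹ - (c - a)⁻¹ ≤ ρ⁻¹) :
    ‖∫ η in b..c, Complex.exp (Complex.I * ((-(3 * a ^ 2) : ℝ) * η + η ^ 3)) *
      ((η ^ β : ℝ) : ℂ) * G η‖ ≤ 5 * (a ^ β * ρ) * ε := by
  have ha0 : 0 < a := by linarith
  have hρ1 : ρ ≤ 1 := by
    by_contra! h
    nlinarith
  have haβ : 0 < a ^ β := Real.rpow_pos_of_pos ha0 _
  have hna : ∀ η ∈ Set.Icc b c, η - a ≠ 0 := fun η hη h => by
    have := hdist η hη
    rw [h, abs_zero] at this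
    linarith
  have hη0 : ∀ η ∈ Set.Icc b c, 0 ≤ η := fun η hη => hb.trans hη.1
  have hfac : ∀ η : ℝ, 3 * η ^ 2 + -(3 * a ^ 2) = 3 * ((η - a) * (η + a)) := fun η => by ring
  have hne : ∀ η ∈ Set.Icc b c, 3 * η ^ 2 + -(3 * a ^ 2) ≠ 0 := by
    intro η hη
    have h1 := hna η hη
    have h2 : η + a ≠ 0 := by linarith [hη0 η hη]
    rw [hfac]
    positivity
  have hpt : ∀ η ∈ Set.Icc b c,
      |η ^ β / (3 * η ^ 2 + -(3 * a ^ 2))| ≤ a ^ β * ρ ^ 2 / (3 * |η - a|) := by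
    intro η hη
    have h0 := hη0 η hη
    have h1 : 0 < |η - a| := abs_pos.2 (hna η hη)
    have h2 : η ^ β * a ≤ a ^ β * (η + a) := by
      rcases le_total η a with h | h
      · have := Real.rpow_le_rpow h0 h hβ0
        nlinarith
      · have h3 : η ^ β = a ^ β * (η / a) ^ β := by
          rw [← Real.mul_rpow ha0.le (by positivity)]
          congr 1; field_simp
        have h4 : (η / a) ^ β ≤ η / a := by
          have := Real.rpow_le_rpow_of_exponent_le (x := η / a) ((one_le_div ha0).2 h)
            (by linarith : β ≤ 1)
          rwa [Real.rpow_one] at this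
        have h5 : η / a * a = η := by field_simp
        calc η ^ β * a = a ^ β * ((η / a) ^ β * a) := by rw [h3]; ring
          _ ≤ a ^ β * (η / a * a) := by gcongr
          _ ≤ _ := by rw [h5]; gcongr; linarith
    have hρa : ρ ^ 2 = 1 / a := by rw [eq_div_iff ha0.ne']; linarith
    rw [hfac, abs_div, abs_mul, abs_mul, abs_of_nonneg (Real.rpow_nonneg h0 _),
      abs_of_pos (by linarith : 0 < η + a), abs_of_pos (by norm_num : (0:ℝ) < 3), hρa,
      div_le_div_iff₀ (by positivity) (by positivity)]
    have : a ^ β * (1 / a) * (3 * (|η - a| * (η + a))) =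
        (a ^ β * (η + a)) * (3 * |η - a|) / a := by ring
    rw [this, le_div_iff₀ ha0]
    nlinarith
  refine norm_integral_le_of_monotone (S := a ^ β * ρ) (σ := -1) hG hβ0 hε (by positivity) hb hbc
    hne (by simp) ?_ ?_ ?_
  · intro η _
    nlinarith [mul_nonneg hβ0 (sq_nonneg a), mul_nonneg (by linarith : 0 ≤ 6 - 3 * β) (sq_nonneg η)]
  · intro η hη
    refine (hpt η hη).trans ?_
    have h1 := hdist η hη
    have h2 : 0 < |η - a| := hρ.trans_le h1
    rw [div_le_iff₀ (by positivity)]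
    have : a ^ β * ρ ^ 2 ≤ a ^ β * ρ * |η - a| := by
      rw [pow_two, ← mul_assoc]; gcongr
    nlinarith
  · have hc1 : ContinuousOn (fun η : ℝ => (η ^ β / (3 * η ^ 2 + -(3 * a ^ 2))) ^ 2)
        (Set.uIcc b c) := by
      rw [Set.uIcc_of_le hbc]
      apply ContinuousOn.pow
      apply ContinuousOn.div _ (by fun_prop) hne
      exact (continuous_id.rpow_const fun _ => Or.inr hβ0).continuousOn
    have hc2 : ContinuousOn (fun η : ℝ => ((η - a) ^ 2)⁻¹) (Set.uIcc b c) := by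
      rw [Set.uIcc_of_le hbc]
      apply ContinuousOn.inv₀ (by fun_prop)
      intro η hη
      exact pow_ne_zero 2 (hna η hη)
    have hftc : ∫ η in b..c, ((η - a) ^ 2)⁻¹ = -(c - a)⁻¹ - -(b - a)⁻¹ := by
      refine intervalIntegral.integral_eq_sub_of_hasDerivAt (f := fun η => -(η - a)⁻¹) ?_
        hc2.intervalIntegrable
      intro η hη
      rw [Set.uIcc_of_le hbc] at hη
      have := (((hasDerivAt_id η).sub_const a).inv (hna η hη)).neg
      convert! this using 1
      simp only [id, neg_div, neg_neg, one_div]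
    have hle : ∀ η ∈ Set.Icc b c, (η ^ β / (3 * η ^ 2 + -(3 * a ^ 2))) ^ 2 ≤
        (a ^ β * ρ ^ 2) ^ 2 * ((η - a) ^ 2)⁻¹ := by
      intro η hη
      have h1 : 0 < |η - a| := abs_pos.2 (hna η hη)
      rw [← sq_abs]
      refine (pow_le_pow_left₀ (abs_nonneg _) (hpt η hη) 2).trans ?_
      rw [div_pow, mul_pow 3, sq_abs, ← div_eq_mul_inv]
      have : 0 < (η - a) ^ 2 := by rw [← sq_abs]; positivity
      gcongr
      linarith
    refine (intervalIntegral.integral_mono_on hbc hc1.intervalIntegrable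
      (hc2.intervalIntegrable.const_mul _) hle).trans ?_
    rw [intervalIntegral.integral_const_mul, hftc]
    calc (a ^ β * ρ ^ 2) ^ 2 * (-(c - a)⁻¹ - -(b - a)⁻¹)
        ≤ (a ^ β * ρ ^ 2) ^ 2 * ρ⁻¹ := by
          gcongr
          linarith
      _ = (a ^ β * ρ) ^ 2 * ρ := by field_simp
      _ ≤ _ := mul_le_of_le_one_right (by positivity) hρ1

/-- Negative `y = -3a²`: the stationary point `a` is cut out with a window of radius `a^{-1/2}`,
the size at which the trivial bound and the integration by parts balance. -/
theorem half_bound_neg {β ε a : ℝ} {G G' : ℝ → ℂ} (hG : IsProfile β ε G G')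
    (hβ0 : 0 ≤ β) (hβ1 : β < 1 / 2) (hε : 0 < ε) (ha : 1 ≤ a) :
    ∃ c₀ : ℝ, ∀ c ≥ c₀,
    ‖∫ η in (0:ℝ)..c, Complex.exp (Complex.I * ((-(3 * a ^ 2) : ℝ) * η + η ^ 3)) *
      ((η ^ β : ℝ) : ℂ) * G η‖ ≤ 14 * a ^ (β - 1/2) * ε := by
  have ha0 : 0 < a := by linarith
  set ρ : ℝ := a ^ (-(1/2:ℝ)) with hρd
  have hρ : 0 < ρ := Real.rpow_pos_of_pos ha0 _
  have haρ : a * ρ ^ 2 = 1 := by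
    rw [hρd, ← Real.rpow_natCast, ← Real.rpow_mul ha0.le]
    norm_num
    rw [Real.rpow_neg_one]
    field_simp
  have hρ1 : ρ ≤ 1 := by
    by_contra! h
    nlinarith
  have hD : a ^ (β - 1/2) = a ^ β * ρ := by
    rw [hρd, ← Real.rpow_add ha0]; rfl
  have haβ : 0 < a ^ β := Real.rpow_pos_of_pos ha0 _
  refine ⟨a + ρ, fun c hc => ?_⟩
  set y : ℝ := -(3 * a ^ 2) with hy
  rw [← intervalIntegral.integral_add_adjacent_intervals (osc_intervalIntegrable y 0 (a - ρ) hG hβ0)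
    (osc_intervalIntegrable y (a - ρ) c hG hβ0),
    ← intervalIntegral.integral_add_adjacent_intervals
      (osc_intervalIntegrable y (a - ρ) (a + ρ) hG hβ0)
      (osc_intervalIntegrable y (a + ρ) c hG hβ0)]
  have h1 := norm_integral_le_away (b := 0) (c := a - ρ) hG hβ0 hβ1 hε ha hρ haρ le_rfl
    (by linarith) (fun η hη => by
      rw [abs_sub_comm]
      exact le_trans (by linarith [hη.2]) (le_abs_self _))
    (by
      have e1 : (0 - a)⁻¹ = - a⁻¹ := by rw [zero_sub, inv_neg]
      have e2 : (a - ρ - a)⁻¹ = - ρ⁻¹ := by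
        rw [show a - ρ - a = -ρ by ring, inv_neg]
      have e3 : 0 < a⁻¹ := by positivity
      rw [e1, e2]
      linarith)
  have h2 := norm_integral_le_trivial (y := y) (b := a - ρ) (c := a + ρ) hG hβ0
    (by linarith) (by linarith)
  have h3 := norm_integral_le_away (b := a + ρ) (c := c) hG hβ0 hβ1 hε ha hρ haρ
    (by linarith) hc (fun η hη => le_trans (by linarith [hη.1]) (le_abs_self _))
    (by
      have e2 : (a + ρ - a)⁻¹ = ρ⁻¹ := by
        rw [show a + ρ - a = ρ by ring]
      have e3 : 0 ≤ (c - a)⁻¹ := inv_nonneg.2 (by linarith)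
      rw [e2]
      linarith)
  have h4 : (a + ρ) ^ β ≤ 2 * a ^ β := by
    have e1 : (a + ρ) ^ β ≤ (2 * a) ^ β := Real.rpow_le_rpow (by positivity) (by linarith) hβ0
    rw [Real.mul_rpow (by norm_num) ha0.le] at e1
    have e2 : (2:ℝ) ^ β ≤ 2 := by
      have := Real.rpow_le_rpow_of_exponent_le (x := 2) (by norm_num) (by linarith : β ≤ 1)
      rwa [Real.rpow_one] at this
    nlinarith
  have h5 : (a + ρ) ^ β * ε * (a + ρ - (a - ρ)) ≤ 2 * a ^ β * ε * (2 * ρ) := by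
    rw [show a + ρ - (a - ρ) = 2 * ρ by ring]
    gcongr
  rw [hD]
  refine (norm_add_le _ _).trans ?_
  refine (add_le_add le_rfl (norm_add_le _ _)).trans ?_
  linarith

/-! ### The pointwise bound -/

theorem IsProfile.osc_integrable {β ε : ℝ} (y : ℝ) {G G' : ℝ → ℂ} (hG : IsProfile β ε G G') :
    Integrable fun η : ℝ => Complex.exp (Complex.I * (y * η + η ^ 3)) *
      ((|η| ^ β : ℝ) : ℂ) * G η := by
  simp_rw [mul_assoc]
  refine hG.integrable.bdd_mul (c := 1) (by fun_prop) (Filter.Eventually.of_forall fun η => ?_)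
  have : Complex.I * (y * η + η ^ 3) = ((y * η + η ^ 3 : ℝ) : ℂ) * Complex.I := by
    push_cast; ring
  rw [this, Complex.norm_exp_ofReal_mul_I]

/-- Collects the three ranges of `y` and lets the upper endpoint of integration tend to infinity. -/
theorem half_line_bound_s2 {β ε : ℝ} (y : ℝ) {G G' : ℝ → ℂ} (hG : IsProfile β ε G G')
    (hβ0 : 0 ≤ β) (hβ1 : β < 1 / 2) (hε : 0 < ε) :
    ‖∫ η in Set.Ioi (0:ℝ), Complex.exp (Complex.I * (y * η + η ^ 3)) *
      ((|η| ^ β : ℝ) : ℂ) * G η‖ ≤ 60 * (1 + |y|) ^ (-(1/4 - β/2)) * ε := by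
  have hγ : -(1/4 - β/2) ≤ 0 := by linarith
  have hγ1 : -1 ≤ -(1/4 - β/2) := by linarith
  set w : ℝ := (1 + |y|) ^ (-(1/4 - β/2)) with hw
  -- replacing `1 + |y|` by a larger `k * z` with `1 ≤ k ≤ 4` costs at most a factor `4`
  have hcmp : ∀ k z : ℝ, 1 ≤ k → k ≤ 4 → 0 < z → 1 + |y| ≤ k * z →
      z ^ (-(1/4 - β/2)) ≤ k * w := by
    intro k z hk1 hk hz h
    have h1 : (k * z) ^ (-(1/4 - β/2)) ≤ w :=
      Real.rpow_le_rpow_of_nonpos (by positivity) h hγ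
    have hk0 : 0 < k := by linarith
    rw [Real.mul_rpow hk0.le hz.le] at h1
    have h2 : k⁻¹ ≤ k ^ (-(1/4 - β/2)) := by
      rw [← Real.rpow_neg_one]
      exact Real.rpow_le_rpow_of_exponent_le hk1 hγ1
    have hz' : 0 < z ^ (-(1/4 - β/2)) := Real.rpow_pos_of_pos hz _
    have h3 : k⁻¹ * z ^ (-(1/4 - β/2)) ≤ w := le_trans (by gcongr) h1
    rwa [inv_mul_le_iff₀ hk0] at h3
  have key : ∃ c₀ : ℝ, ∀ c ≥ c₀, ‖∫ η in (0:ℝ)..c, Complex.exp (Complex.I * (y * η + η ^ 3)) *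
      ((η ^ β : ℝ) : ℂ) * G η‖ ≤ 60 * w * ε := by
    rcases le_or_gt |y| 3 with h3 | h3
    · refine ⟨2, fun c hc => (half_bound_small hG hβ0 hβ1 hε h3 hc).trans ?_⟩
      have := hcmp 4 1 (by norm_num) le_rfl one_pos (by linarith)
      rw [Real.one_rpow] at this
      nlinarith
    · rcases le_total 0 y with hy | hy
      · rw [abs_of_nonneg hy] at h3
        obtain ⟨c₀, h⟩ := half_bound_pos (y := y) hG hβ0 hβ1 hε (by linarith)
        refine ⟨c₀, fun c hc => (h c hc).trans ?_⟩
        have := hcmp 2 y (by norm_num) (by norm_num) (by linarith)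
          (by rw [abs_of_nonneg hy]; linarith)
        have hw0 : 0 < w := Real.rpow_pos_of_pos (by positivity) _
        nlinarith
      · rw [abs_of_nonpos hy] at h3
        set a : ℝ := Real.sqrt (-y / 3) with ha
        have ha2 : a ^ 2 = -y / 3 := Real.sq_sqrt (by linarith)
        have ha1 : 1 ≤ a := Real.one_le_sqrt.2 (by linarith)
        have hya : y = -(3 * a ^ 2) := by rw [ha2]; ring
        obtain ⟨c₀, h⟩ := half_bound_neg hG hβ0 hβ1 hε ha1
        rw [← hya] at h
        refine ⟨c₀, fun c hc => (h c hc).trans ?_⟩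
        have h4 := hcmp 4 (a ^ 2) (by norm_num) le_rfl (by positivity)
          (by rw [abs_of_nonpos hy, ha2]; linarith)
        have h5 : (a ^ 2) ^ (-(1/4 - β/2)) = a ^ (β - 1/2) := by
          rw [← Real.rpow_natCast, ← Real.rpow_mul (by linarith)]
          congr 1; push_cast; ring
        rw [h5] at h4
        have hw0 : 0 < w := Real.rpow_pos_of_pos (by positivity) _
        nlinarith
  obtain ⟨c₀, hc₀⟩ := key
  have hlim := (intervalIntegral_tendsto_integral_Ioi (0:ℝ)
    (hG.osc_integrable y).integrableOn Filter.tendsto_id).norm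
  refine le_of_tendsto hlim ?_
  filter_upwards [Filter.eventually_ge_atTop c₀, Filter.eventually_ge_atTop 0] with c hc hc0
  convert! hc₀ c hc using 2
  apply intervalIntegral.integral_congr
  intro η hη
  simp only [id, Set.uIcc_of_le hc0] at hη
  simp only [abs_of_nonneg hη.1]

/-- Reflection together with complex conjugation exchanges the two half-lines in the oscillatory
integral. -/
theorem IsProfile.reflect {β ε : ℝ} {G G' : ℝ → ℂ} (hG : IsProfile β ε G G') :
    IsProfile β ε (fun η => starRingEnd ℂ (G (-η))) (fun η => -starRingEnd ℂ (G' (-η))) where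
  hasDerivAt η := by
    have h1 : HasDerivAt (fun η => G (-η)) (-G' (-η)) η := by
      simpa using! (hG.hasDerivAt (-η)).scomp η (hasDerivAt_neg η)
    simpa using! h1.star
  cont_deriv := by
    have := hG.cont_deriv
    exact (Complex.continuous_conj.comp (this.comp continuous_neg)).neg
  bound η := by simpa using hG.bound (-η)
  sq_integrable := by simpa using hG.sq_integrable.comp_neg
  sq_le := by
    have := integral_neg_eq_self (fun η => ‖G' η‖ ^ 2) volume
    simpa [this] using hG.sq_le
  integrable := by
    have h := hG.integrable.comp_neg
    have h2 := Complex.conjCLE.toContinuousLinearMap.integrable_comp h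
    simpa using! h2

/-- The scale-free pointwise dispersive bound. -/
theorem line_bound_s2 {β ε : ℝ} (y : ℝ) {G G' : ℝ → ℂ} (hG : IsProfile β ε G G')
    (hβ0 : 0 ≤ β) (hβ1 : β < 1 / 2) (hε : 0 < ε) :
    ‖∫ η : ℝ, Complex.exp (Complex.I * (y * η + η ^ 3)) *
      ((|η| ^ β : ℝ) : ℂ) * G η‖ ≤ 120 * (1 + |y|) ^ (-(1/4 - β/2)) * ε := by
  have hi := hG.osc_integrable y
  rw [← intervalIntegral.integral_Iic_add_Ioi hi.integrableOn hi.integrableOn (b := 0)]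
  have h1 := half_line_bound_s2 y hG hβ0 hβ1 hε
  have h2 := half_line_bound_s2 y hG.reflect hβ0 hβ1 hε
  have h3 : ‖∫ η in Set.Iic (0:ℝ), Complex.exp (Complex.I * (y * η + η ^ 3)) *
      ((|η| ^ β : ℝ) : ℂ) * G η‖ = ‖∫ η in Set.Ioi (0:ℝ), Complex.exp (Complex.I * (y * η + η ^ 3)) *
      ((|η| ^ β : ℝ) : ℂ) * starRingEnd ℂ (G (-η))‖ := by
    rw [← Complex.norm_conj (∫ η in Set.Iic (0:ℝ), _), ← integral_conj]
    have := integral_comp_neg_Ioi (0:ℝ) (fun η : ℝ => starRingEnd ℂ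
      (Complex.exp (Complex.I * (y * η + η ^ 3)) * ((|η| ^ β : ℝ) : ℂ) * G η))
    rw [neg_zero] at this
    rw [← this]
    congr 2
    ext η
    simp only [map_mul, ← Complex.exp_conj, map_add, map_pow, Complex.conj_ofReal, Complex.conj_I,
      abs_neg]
    congr 3
    push_cast
    ring
  refine (norm_add_le _ _).trans ?_
  rw [h3]
  linarith

/-! ### Undoing the scaling -/

/-- Undoing the scaling: with `r = t^{-1/3}`, the evolution is
`r^{1+β}` times the scale-free oscillatory integral at `y = r x`. -/
theorem norm_fracAiry_le {β ε t r x : ℝ} (hβ0 : 0 ≤ β) (hβ1 : β < 1 / 2) (hr : 0 < r)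
    (htr : t * r ^ 3 = 1) (f : SchwartzMap ℝ ℂ)
    (hf : LinfNorm (FT f) + Real.sqrt r * L2norm (fun x => (x : ℂ) * f x) ≤ ε) :
    ‖fracAiry f t β x‖ ≤ 120 * ε * r ^ (1 + β) * (1 + |r * x|) ^ (-(1/4 - β/2)) := by
  have hscale : ∫ ξ : ℝ, Complex.exp (Complex.I * (x * ξ + t * ξ ^ 3)) *
        ((|ξ| ^ β : ℝ) : ℂ) * FT f ξ =
      ((r ^ (1 + β) : ℝ) : ℂ) * ∫ η : ℝ, Complex.exp (Complex.I * ((r * x : ℝ) * η + η ^ 3)) *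
        ((|η| ^ β : ℝ) : ℂ) * FT f (r * η) := by
    have h1 := Measure.integral_comp_mul_left (fun ξ : ℝ =>
      Complex.exp (Complex.I * (x * ξ + t * ξ ^ 3)) * ((|ξ| ^ β : ℝ) : ℂ) * FT f ξ) r
    have h2 : ∀ η : ℝ, Complex.exp (Complex.I * (x * (r * η : ℝ) + t * (r * η : ℝ) ^ 3)) *
        ((|r * η| ^ β : ℝ) : ℂ) * FT f (r * η) = ((r ^ β : ℝ) : ℂ) *
        (Complex.exp (Complex.I * ((r * x : ℝ) * η + η ^ 3)) *
        ((|η| ^ β : ℝ) : ℂ) * FT f (r * η)) := by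
      intro η
      have htr' : (t : ℂ) * r ^ 3 = 1 := by exact_mod_cast htr
      have h3 : (x : ℂ) * (r * η : ℝ) + t * (r * η : ℝ) ^ 3 = (r * x : ℝ) * η + η ^ 3 := by
        push_cast
        linear_combination (η : ℂ) ^ 3 * htr'
      rw [h3, abs_mul, abs_of_pos hr, Real.mul_rpow hr.le (abs_nonneg _)]
      push_cast
      ring
    simp_rw [h2] at h1
    rw [integral_const_mul, abs_of_pos (by positivity), Complex.real_smul] at h1
    have hr' : (r : ℂ) ≠ 0 := by exact_mod_cast hr.ne'
    rw [Real.rpow_add hr, Real.rpow_one, Complex.ofReal_mul, mul_assoc, h1, Complex.ofReal_inv,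
      mul_inv_cancel_left₀ hr']
  have hw : 0 < (1 + |r * x|) ^ (-(1/4 - β/2)) := Real.rpow_pos_of_pos (by positivity) _
  have hc : ‖(Real.sqrt (2 * Real.pi) : ℂ)⁻¹‖ ≤ 1 := by
    rw [norm_inv, Complex.norm_real, Real.norm_of_nonneg (Real.sqrt_nonneg _)]
    apply inv_le_one_of_one_le₀
    rw [Real.one_le_sqrt]
    linarith [Real.pi_gt_three]
  have hpow : 0 < r ^ (1 + β) := Real.rpow_pos_of_pos hr _
  have hM : 0 < 120 * r ^ (1 + β) * (1 + |r * x|) ^ (-(1/4 - β/2)) := by positivity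
  -- The oscillatory estimates need a positive `ε`, so they are applied to every `ε' > ε`.
  have hmain : ∀ ε' > ε, 0 < ε' → ‖fracAiry f t β x‖ ≤
      ε' * (120 * r ^ (1 + β) * (1 + |r * x|) ^ (-(1/4 - β/2))) := by
    intro ε' hε' hpos
    obtain ⟨G', hG⟩ := exists_isProfile hβ0 (by linarith) hr f (hf.trans hε'.le)
    have h := line_bound_s2 (r * x) hG hβ0 hβ1 hpos
    rw [fracAiry, hscale, norm_mul, norm_mul, Complex.norm_real, Real.norm_of_nonneg hpow.le]
    calc _ ≤ 1 * (r ^ (1 + β) * (120 * (1 + |r * x|) ^ (-(1/4 - β/2)) * ε')) := by gcongr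
      _ = _ := by ring
  have hε0 : 0 ≤ ε := by
    refine le_trans ?_ hf
    have h1 : 0 ≤ LinfNorm (FT f) := Real.iSup_nonneg fun _ => norm_nonneg _
    have h2 : 0 ≤ L2norm (fun x => (x : ℂ) * f x) := Real.sqrt_nonneg _
    positivity
  have hfin : ‖fracAiry f t β x‖ / (120 * r ^ (1 + β) * (1 + |r * x|) ^ (-(1/4 - β/2))) ≤ ε := by
    refine le_of_forall_gt_imp_ge_of_dense fun ε' hε' => ?_
    rw [div_le_iff₀ hM]
    exact hmain ε' hε' (hε0.trans_lt hε')
  rw [div_le_iff₀ hM] at hfin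
  linarith

/-- Lemma 2.1 (L^p dispersive estimate for the Airy evolution). -/
theorem airy_Lp_dispersive (β p : ℝ) (hβ : β ∈ Set.Ico (0:ℝ) (1/2))
    (hp : 1 < p) (hp' : 1 < p * (1/4 - β/2)) :
    ∃ C : ℝ, 0 < C ∧
      ∀ (ε₁ : ℝ) (f : ℝ → SchwartzMap ℝ ℂ),
        (∀ t : ℝ, 1 ≤ t →
            LinfNorm (FT ⇑(f t)) + t ^ (-(1:ℝ)/6) * L2norm (fun x => (x : ℂ) * f t x) ≤ ε₁) →
        ∀ t : ℝ, 1 ≤ t →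
          LpNorm p (fun x => fracAiry (⇑(f t)) t β x) ≤
            C * ε₁ * t ^ (-(1:ℝ)/3 - β/3 + 1/(3*p)) := by
  obtain ⟨hβ0, hβ1⟩ := hβ
  have hp0 : 0 < p := by linarith
  set J : ℝ := ∫ y : ℝ, (1 + |y|) ^ (-(p * (1/4 - β/2))) with hJ
  have hJ0 : 0 ≤ J := integral_nonneg fun y => by positivity
  have hJi : Integrable fun y : ℝ => (1 + |y|) ^ (-(p * (1/4 - β/2))) := by
    have := integrable_one_add_norm (E := ℝ) (μ := volume) (r := p * (1/4 - β/2)) (by simpa using hp')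
    simpa using this
  refine ⟨120 * J ^ (1 / p) + 1, by positivity, ?_⟩
  intro ε₁ f hf t ht
  have ht0 : 0 < t := by linarith
  set r : ℝ := t ^ (-(1:ℝ)/3) with hr
  have hr0 : 0 < r := Real.rpow_pos_of_pos ht0 _
  have htr : t * r ^ 3 = 1 := by
    rw [hr, ← Real.rpow_natCast, ← Real.rpow_mul ht0.le]
    norm_num
    rw [Real.rpow_neg_one]
    field_simp
  have hsqrt : Real.sqrt r = t ^ (-(1:ℝ)/6) := by
    rw [Real.sqrt_eq_rpow, hr, ← Real.rpow_mul ht0.le]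
    norm_num
  have hft := hf t ht
  rw [← hsqrt] at hft
  have hε0 : 0 ≤ ε₁ := by
    refine le_trans ?_ hft
    have h1 : 0 ≤ LinfNorm (FT (f t)) := Real.iSup_nonneg fun _ => norm_nonneg _
    have h2 : 0 ≤ L2norm (fun x => (x : ℂ) * f t x) := Real.sqrt_nonneg _
    positivity
  set A : ℝ := 120 * ε₁ * r ^ (1 + β) with hA
  have hA0 : 0 ≤ A := by positivity
  have hpt : ∀ x, ‖fracAiry (f t) t β x‖ ^ p ≤ A ^ p * (1 + |r * x|) ^ (-(p * (1/4 - β/2))) := by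
    intro x
    refine (Real.rpow_le_rpow (norm_nonneg _) (norm_fracAiry_le hβ0 hβ1 hr0 htr (f t) hft)
      hp0.le).trans (le_of_eq ?_)
    rw [Real.mul_rpow hA0 (by positivity), ← Real.rpow_mul (by positivity)]
    congr 2
    ring
  have hint : ∫ x : ℝ, ‖fracAiry (f t) t β x‖ ^ p ≤ A ^ p * (r⁻¹ * J) := by
    refine (integral_mono_of_nonneg (Filter.Eventually.of_forall fun x => by positivity)
      ((hJi.comp_mul_left' hr0.ne').const_mul (A ^ p)) (Filter.Eventually.of_forall hpt)).trans ?_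
    rw [integral_const_mul,
      Measure.integral_comp_mul_left (fun y : ℝ => (1 + |y|) ^ (-(p * (1/4 - β/2)))) r,
      abs_of_pos (by positivity), smul_eq_mul]
  have hLp : LpNorm p (fun x => fracAiry (f t) t β x) ≤ (A ^ p * (r⁻¹ * J)) ^ (1 / p) :=
    Real.rpow_le_rpow (integral_nonneg fun x => by positivity) hint (by positivity)
  refine hLp.trans ?_
  have hexp : r ^ (1 + β) * r⁻¹ ^ (1 / p) = t ^ (-(1:ℝ)/3 - β/3 + 1/(3*p)) := by
    rw [← Real.rpow_neg_one r, ← Real.rpow_mul hr0.le, ← Real.rpow_add hr0, hr,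
      ← Real.rpow_mul ht0.le]
    congr 1
    field_simp
    ring
  rw [Real.mul_rpow (by positivity) (by positivity), Real.mul_rpow (by positivity) hJ0,
    ← Real.rpow_mul hA0, mul_one_div_cancel hp0.ne', Real.rpow_one, ← hexp, hA]
  have hX : 0 ≤ ε₁ * (r ^ (1 + β) * r⁻¹ ^ (1 / p)) := by positivity
  linarith
end
end
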